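/- arXiv:2206.05372 — 2 statements merged into one kernel-verified Lean document; each statement's English description precedes it below -/
import Mathlib

section
/- The elliptic curve E₁ over ℂ(t) given by the Weierstrass equation y² = x³ + t + t⁻¹ has trivial Mordell–Weil group: the point at infinity is its only ℂ(t)-rational point. Equivalently, there is no pair (x,y) ∈ ℂ(t) × ℂ(t) with y² = x³ + t + t⁻¹. -/
/-!
A point `(x, y)` of `E₁` carries the derivation `3 y x' - 2 x y'`, which up to a factor is the
pullback of the invariant differential of `y² = x³ + 1` along the induced map from the curve
`s⁶ = t⁵ (t² + 1)`. Comparing poles and degrees, this pullback is forced to be a nonzero constant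
`c` times the form `t^(-1/6) (t² + 1)^(-5/6) dt`. Everything can now be reduced modulo a large
prime `p`. If `p ≡ 1 mod 6`, the curve `y² = x³ + 1` is ordinary, so exactness of the pullback of
its invariant differential would make a logarithmic differential exact, which a degree count
forbids; if moreover `p ≡ 3 mod 4`, the form `t^(-1/6) (t² + 1)^(-5/6) dt`, which comes from the
supersingular curve `y² = x³ + x`, is exact. Dirichlet's theorem provides such a `p ≡ 7 mod 12`.
-/

universe u

open Polynomial

section Specialization

theorem exists_ringHom_charP_map_ne_zero {R : Type u} [CommRing R] [IsDomain R] [CharZero R]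
    [Algebra.FiniteType ℤ R] {r : R} (hr : r ≠ 0) :
    ∃ M : ℕ, ∀ p : ℕ, p.Prime → M < p →
      ∃ (F : Type u) (_ : Field F) (_ : CharP F p) (ρ : R →+* F), ρ r ≠ 0 := by
  have : Algebra.FinitePresentation ℤ R := Algebra.FinitePresentation.of_finiteType.1 inferInstance
  have comap_isOpenMap :=
    PrimeSpectrum.isOpenMap_comap_of_hasGoingDown_of_finitePresentation (R := ℤ) (S := R)
  have bot_mem : (⊥ : PrimeSpectrum R) ∈ (PrimeSpectrum.basicOpen r : Set _) := by
    simpa using hr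
  obtain ⟨_, ⟨n, rfl⟩, hn_mem, hn_sub⟩ :=
    PrimeSpectrum.isTopologicalBasis_basic_opens.exists_subset_of_mem_open
      (Set.mem_image_of_mem (PrimeSpectrum.comap (algebraMap ℤ R)) bot_mem)
      (comap_isOpenMap _ (PrimeSpectrum.basicOpen r).isOpen)
  have hn : n ≠ 0 := by
    rintro rfl
    simp at hn_mem
  refine ⟨n.natAbs, fun p hp hlt => ?_⟩
  have hpn : ¬ (p : ℤ) ∣ n := fun h =>
    hlt.not_ge (Nat.le_of_dvd (Int.natAbs_pos.2 hn) (Int.natCast_dvd.1 h))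
  have hp_span : (Ideal.span {(p : ℤ)}).IsPrime :=
    (Ideal.span_singleton_prime (by exact_mod_cast hp.ne_zero)).2 (Nat.prime_iff_prime_int.1 hp)
  obtain ⟨q, hrq, hq⟩ := hn_sub (show (⟨_, hp_span⟩ : PrimeSpectrum ℤ) ∈ _ from
    fun h => hpn (Ideal.mem_span_singleton.1 h))
  have hpq : (p : R) ∈ q.asIdeal := by
    have : (p : ℤ) ∈ (PrimeSpectrum.comap (algebraMap ℤ R) q).asIdeal := by
      rw [hq]
      exact Ideal.mem_span_singleton_self _
    simpa using this
  have hρ (x : R) : algebraMap R q.asIdeal.ResidueField x = 0 ↔ x ∈ q.asIdeal :=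
    Ideal.algebraMap_residueField_eq_zero
  refine ⟨q.asIdeal.ResidueField, inferInstance, (CharP.charP_iff_prime_eq_zero hp).2 ?_,
    algebraMap R _, fun h => hrq ((hρ r).1 h)⟩
  simpa using (hρ p).2 hpq

theorem exists_finiteType_subalgebra_forall_mem_lifts {K : Type*} [CommRing K]
    (s : Finset K[X]) :
    ∃ R : Subalgebra ℤ K, Algebra.FiniteType ℤ R ∧ ∀ f ∈ s, f ∈ lifts (algebraMap R K) := by
  classical
  refine ⟨Algebra.adjoin ℤ (s.biUnion coeffs), .adjoin_of_finite (Finset.finite_toSet _),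
    fun f hf => (lifts_iff_coeffs_subset_range f).2 fun a ha => ?_⟩
  exact ⟨⟨a, Algebra.subset_adjoin (Finset.mem_biUnion.2 ⟨f, hf, ha⟩)⟩, rfl⟩

end Specialization

section ExactPolynomials

variable {F : Type*} [Field F]

theorem mem_range_derivative_iff {f : F[X]} :
    f ∈ (derivative (R := F)).range ↔ ∀ n : ℕ, (n + 1 : F) = 0 → f.coeff n = 0 := by
  constructor
  · rintro ⟨g, rfl⟩ n hn
    rw [coeff_derivative, hn, mul_zero]
  · intro hf
    rw [f.as_sum_support]
    refine Submodule.sum_mem _ fun n hn => ?_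
    have hn' : (n + 1 : F) ≠ 0 := fun h => mem_support_iff.1 hn (hf n h)
    refine ⟨monomial (n + 1) (f.coeff n / (n + 1)), ?_⟩
    rw [derivative_monomial_succ, div_mul_cancel₀ _ hn']

theorem natDegree_add_one_ne_zero_of_mem_range_derivative {f : F[X]} (hf₀ : f ≠ 0)
    (hf : f ∈ (derivative (R := F)).range) : (f.natDegree + 1 : F) ≠ 0 := fun h =>
  leadingCoeff_ne_zero.2 hf₀ (mem_range_derivative_iff.1 hf _ h)

theorem pow_char_mul_mem_range_derivative {R : Type*} [CommSemiring R] (p : ℕ) [CharP R p]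
    (g : R[X]) {f : R[X]} (hf : f ∈ (derivative (R := R)).range) :
    g ^ p * f ∈ (derivative (R := R)).range := by
  obtain ⟨h, rfl⟩ := hf
  refine ⟨g ^ p * h, ?_⟩
  simp [derivative_mul, derivative_pow]

theorem X_pow_mul_X_sq_add_one_pow_mem_range_derivative {N : ℕ} (hN : Odd N)
    [CharP F (6 * N + 1)] :
    (X : F[X]) ^ N * (X ^ 2 + 1) ^ (5 * N) ∈ (derivative (R := F)).range := by
  refine mem_range_derivative_iff.2 fun n hn => ?_
  obtain ⟨k, hk⟩ : 6 * N + 1 ∣ n + 1 := by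
    rw [← CharP.cast_eq_zero_iff F]
    exact_mod_cast hn
  have expand_eq : ((X : F[X]) ^ 2 + 1) ^ (5 * N) = expand F 2 ((X + 1) ^ (5 * N)) := by simp
  rw [coeff_X_pow_mul', expand_eq, coeff_expand two_pos, ite_eq_right_iff]
  refine fun hNn => ite_eq_right_iff.2 fun h_even => coeff_eq_zero_of_natDegree_lt ?_
  have natDegree_le : ((X + 1 : F[X]) ^ (5 * N)).natDegree ≤ 5 * N := by compute_degree
  -- `k = 1` would give `n - N = 5 * N`, which is odd.
  have two_le_k : 2 ≤ k := by
    by_contra! hk_lt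
    obtain ⟨m, rfl⟩ := hN
    interval_cases k <;> omega
  have : (6 * N + 1) * 2 ≤ n + 1 := hk ▸ Nat.mul_le_mul_left _ two_le_k
  omega

theorem pow_mul_pow_mul_mem_range_derivative (U A : F[X]) {m k : ℕ} (hm : (m + 1 : F) ≠ 0)
    (hmk : (m + 1 + 3 * (k + 1) : F) = 0) :
    U ^ m * A ^ k * (3 * A * derivative U - derivative A * U) ∈ (derivative (R := F)).range := by
  refine (Submodule.smul_mem_iff _ hm).1 ⟨3 * (U ^ (m + 1) * A ^ (k + 1)), ?_⟩
  have hmk' : (m + 1 + 3 * (k + 1) : F[X]) = 0 := by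
    simpa only [map_add, map_mul, map_natCast, map_one, map_zero, map_ofNat] using
      congrArg (C : F → F[X]) hmk
  rw [smul_eq_C_mul, ← map_ofNat C, derivative_C_mul, derivative_mul, derivative_pow_succ,
    derivative_pow_succ]
  simp only [map_add, map_natCast, map_one, map_ofNat]
  linear_combination (U ^ (m + 1) * A ^ k * derivative A) * hmk'

theorem natCast_three_mul_add_one_ne_zero {N j : ℕ} [CharP F (6 * N + 1)] (hj : j ≤ 3 * N)
    (hj_ne : j ≠ 2 * N) : ((3 * j : ℕ) + 1 : F) ≠ 0 := by
  rw [← Nat.cast_succ, Ne, CharP.cast_eq_zero_iff F (6 * N + 1)]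
  rintro ⟨i, hi⟩
  obtain rfl | rfl | hi₂ : i = 0 ∨ i = 1 ∨ 2 ≤ i := by omega
  · omega
  · omega
  · have := Nat.mul_le_mul_left (6 * N + 1) hi₂
    omega

/-- The coefficient `(3N).choose (2N)` isolated here is the Hasse invariant of `y² = x³ + 1`. -/
theorem mul_pow_mul_mem_range_derivative {N : ℕ} (hp : (6 * N + 1).Prime) [CharP F (6 * N + 1)]
    {U V A D : F[X]} (h_eq : V ^ 2 = U ^ 3 + A) (hD : D = 3 * A * derivative U - derivative A * U)
    (h_exact : V ^ (6 * N) * A ^ (5 * N) * D ∈ (derivative (R := F)).range) :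
    (U * A) ^ (6 * N) * D ∈ (derivative (R := F)).range := by
  have hp₀ : (6 * N + 1 : F) = 0 := by exact_mod_cast CharP.cast_eq_zero F (6 * N + 1)
  let term (j : ℕ) : F[X] := U ^ (3 * j) * A ^ (8 * N - j) * D
  have expansion : V ^ (6 * N) * A ^ (5 * N) * D =
      ∑ j ∈ Finset.range (3 * N + 1), ((3 * N).choose j : F) • term j := by
    rw [show 6 * N = 2 * (3 * N) by ring, pow_mul, h_eq, add_pow, Finset.sum_mul, Finset.sum_mul]
    refine Finset.sum_congr rfl fun j hj => ?_
    have : 8 * N - j = 3 * N - j + 5 * N := by grind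
    simp only [term, this, pow_add, pow_mul, smul_eq_C_mul, map_natCast]
    ring
  have term_mem : ∀ j ∈ Finset.range (3 * N + 1), j ≠ 2 * N →
      term j ∈ (derivative (R := F)).range := by
    intro j hj hj_ne
    obtain ⟨k, hk⟩ : ∃ k, 8 * N = j + k := ⟨8 * N - j, by grind⟩
    have hk' : (8 * N : F) = j + k := by exact_mod_cast congrArg (Nat.cast : ℕ → F) hk
    simp only [term, hD, show 8 * N - j = k by omega]
    refine pow_mul_pow_mul_mem_range_derivative U A
      (natCast_three_mul_add_one_ne_zero (by grind) hj_ne) ?_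
    push_cast
    linear_combination 4 * hp₀ - 3 * hk'
  have hasse_ne_zero : ((3 * N).choose (2 * N) : F) ≠ 0 := by
    rw [Ne, CharP.cast_eq_zero_iff F (6 * N + 1), ← hp.coprime_iff_not_dvd]
    exact hp.coprime_choose_of_lt (by omega) (by omega)
  have mem_middle : 2 * N ∈ Finset.range (3 * N + 1) := Finset.mem_range.2 (by omega)
  rw [expansion, ← Finset.add_sum_erase _ _ mem_middle, Submodule.add_mem_iff_left _
    (Submodule.sum_mem _ fun j hj => Submodule.smul_mem _ _
      (term_mem j (Finset.mem_of_mem_erase hj) (Finset.ne_of_mem_erase hj))),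
    Submodule.smul_mem_iff _ hasse_ne_zero] at h_exact
  convert h_exact using 2
  rw [mul_pow, show 3 * (2 * N) = 6 * N by ring, show 8 * N - 2 * N = 6 * N by omega]

end ExactPolynomials

section Wronskian

variable {R : Type*} [CommRing R]

theorem coeff_mul_derivative_natDegree_add_sub_one (a b : R[X]) :
    (a * derivative b).coeff (a.natDegree + b.natDegree - 1) =
      a.leadingCoeff * b.leadingCoeff * b.natDegree := by
  obtain hb | ⟨n, hn⟩ : b.natDegree = 0 ∨ ∃ n, b.natDegree = n + 1 := by
    cases b.natDegree <;> simp
  · simp [derivative_of_natDegree_zero hb, hb]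
  · have : (derivative b).natDegree ≤ n := (natDegree_derivative_le b).trans (by omega)
    rw [show a.natDegree + b.natDegree - 1 = a.natDegree + n by omega,
      coeff_mul_add_eq_of_natDegree_le le_rfl this, coeff_derivative, leadingCoeff, leadingCoeff,
      hn]
    push_cast
    ring

theorem natDegree_wronskian_of_natDegree_ne [IsDomain R] [CharZero R] {a b : R[X]} (ha : a ≠ 0)
    (hb : b ≠ 0) (h : a.natDegree ≠ b.natDegree) :
    (wronskian a b).natDegree = a.natDegree + b.natDegree - 1 := by
  have coeff_eq : (wronskian a b).coeff (a.natDegree + b.natDegree - 1) =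
      a.leadingCoeff * b.leadingCoeff * (b.natDegree - a.natDegree) := by
    rw [wronskian, coeff_sub, coeff_mul_derivative_natDegree_add_sub_one, mul_comm (derivative a),
      add_comm, coeff_mul_derivative_natDegree_add_sub_one]
    ring
  have coeff_ne : (wronskian a b).coeff (a.natDegree + b.natDegree - 1) ≠ 0 := by
    rw [coeff_eq]
    refine mul_ne_zero (mul_ne_zero (leadingCoeff_ne_zero.2 ha) (leadingCoeff_ne_zero.2 hb)) ?_
    rw [sub_ne_zero]
    exact_mod_cast h.symm
  have := natDegree_wronskian_lt_add fun h₀ : wronskian a b = 0 => coeff_ne (by simp [h₀])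
  exact natDegree_eq_of_le_of_coeff_ne_zero (by omega) coeff_ne

theorem wronskian_cube_right (a b : R[X]) :
    wronskian a (b ^ 3) = b ^ 2 * (3 * a * derivative b - derivative a * b) := by
  rw [wronskian, derivative_pow, map_natCast]
  push_cast
  ring

theorem three_mul_mul_derivative_sub_eq {U V A : R[X]} (h : V ^ 2 = U ^ 3 + A) :
    3 * A * derivative U - derivative A * U =
      V * (3 * V * derivative U - 2 * U * derivative V) := by
  obtain rfl : A = V ^ 2 - U ^ 3 := by rw [h, add_sub_cancel_left]
  simp only [derivative_sub, derivative_pow, map_natCast]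
  push_cast
  ring

end Wronskian

section Descent

variable {R : Type*} [CommRing R] [IsDomain R]

theorem sq_dvd_and_cube_dvd_of_pow_five_dvd {q U V : R} (hq : Prime q) (hU : q ∣ U)
    (h : q ^ 5 ∣ V ^ 2 - U ^ 3) : q ^ 2 ∣ U ∧ q ^ 3 ∣ V := by
  obtain ⟨k, hk⟩ := h
  obtain ⟨U, rfl⟩ := hU
  obtain ⟨V, rfl⟩ : q ∣ V :=
    hq.dvd_of_dvd_pow (n := 2) ⟨q ^ 2 * U ^ 3 + q ^ 4 * k, by linear_combination hk⟩
  obtain ⟨V, rfl⟩ : q ∣ V :=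
    hq.dvd_of_dvd_pow (n := 2) ⟨U ^ 3 + q ^ 2 * k,
      mul_left_cancel₀ (pow_ne_zero 2 hq.ne_zero) (by linear_combination hk)⟩
  obtain ⟨U, rfl⟩ : q ∣ U :=
    hq.dvd_of_dvd_pow (n := 3) ⟨V ^ 2 - q * k,
      mul_left_cancel₀ (pow_ne_zero 3 hq.ne_zero) (by linear_combination -hk)⟩
  obtain ⟨V, rfl⟩ : q ∣ V :=
    hq.dvd_of_dvd_pow (n := 2) ⟨q * U ^ 3 + k,
      mul_left_cancel₀ (pow_ne_zero 4 hq.ne_zero) (by linear_combination hk)⟩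
  exact ⟨⟨U, by ring⟩, ⟨V, by ring⟩⟩

theorem exists_isCoprime_of_sq_eq_cube_add [IsPrincipalIdealRing R] {P U V d : R} (hd : d ≠ 0)
    (h : V ^ 2 = U ^ 3 + P * d ^ 6) :
    ∃ U V d : R, d ≠ 0 ∧ V ^ 2 = U ^ 3 + P * d ^ 6 ∧ IsCoprime U d := by
  induction d using (wellFounded_dvdNotUnit (α := R)).induction generalizing U V with
  | _ d ih =>
  by_cases hUd : IsCoprime U d
  · exact ⟨U, V, d, hd, h, hUd⟩
  obtain ⟨q, hq, hqU, d, rfl⟩ : ∃ q, Prime q ∧ q ∣ U ∧ q ∣ d := by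
    by_contra! hne
    exact hUd (isCoprime_of_prime_dvd (fun h₀ => hd h₀.2) fun q hq hqU hqd => hne q hq hqU hqd)
  obtain ⟨⟨U, rfl⟩, V, rfl⟩ := sq_dvd_and_cube_dvd_of_pow_five_dvd (V := V) hq hqU
    ⟨q * P * d ^ 6, by linear_combination h⟩
  have hd' : d ≠ 0 := right_ne_zero_of_mul hd
  exact ih (U := U) (V := V) d ⟨hd', q, hq.not_isUnit, mul_comm q d⟩ hd'
    (mul_left_cancel₀ (pow_ne_zero 6 hq.ne_zero) (by linear_combination h))

end Descent

section PolynomialModel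

theorem exists_polynomial_solution {K : Type*} [Field K] {x y : RatFunc K}
    (h : y ^ 2 = x ^ 3 + RatFunc.X + (RatFunc.X)⁻¹) :
    ∃ U V d : K[X], d ≠ 0 ∧ V ^ 2 = U ^ 3 + X ^ 5 * (X ^ 2 + 1) * d ^ 6 := by
  obtain ⟨a, b, hb, rfl⟩ := IsFractionRing.div_surjective (A := K[X]) x
  obtain ⟨e, f, hf, rfl⟩ := IsFractionRing.div_surjective (A := K[X]) y
  have hb₀ : algebraMap K[X] (RatFunc K) b ≠ 0 :=
    IsFractionRing.to_map_ne_zero_of_mem_nonZeroDivisors hb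
  have hf₀ : algebraMap K[X] (RatFunc K) f ≠ 0 :=
    IsFractionRing.to_map_ne_zero_of_mem_nonZeroDivisors hf
  have hX₀ : (RatFunc.X : RatFunc K) ≠ 0 := RatFunc.X_ne_zero
  refine ⟨X ^ 2 * a * b * f ^ 2, X ^ 3 * e * b ^ 3 * f ^ 2, b * f,
    nonZeroDivisors.ne_zero (mul_mem hb hf), IsFractionRing.injective K[X] (RatFunc K) ?_⟩
  simp only [map_mul, map_pow, map_add, map_one, RatFunc.algebraMap_X]
  field_simp at h
  linear_combination
    (RatFunc.X ^ 5 * algebraMap K[X] _ b ^ 3 * algebraMap K[X] _ f ^ 4) * h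

theorem isCoprime_X_pow_mul_pow {K : Type*} [Field K] {U V d : K[X]}
    (h : V ^ 2 = U ^ 3 + X ^ 5 * (X ^ 2 + 1) * d ^ 6) (hUd : IsCoprime U d) :
    IsCoprime V (X ^ 4 * d ^ 5) := by
  have hVd : IsCoprime V d := by
    rw [← IsCoprime.pow_left_iff two_pos, h, pow_succ d, ← mul_assoc,
      IsCoprime.add_mul_right_left_iff]
    exact hUd.pow_left
  have hXV : ¬ X ∣ V := by
    intro hXV
    have hXU : X ∣ U := prime_X.dvd_of_dvd_pow (n := 3) <|
      (dvd_add_left (((dvd_pow_self X (by decide)).mul_right _).mul_right _)).1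
        (h ▸ dvd_pow hXV two_ne_zero)
    obtain ⟨⟨U, rfl⟩, V, rfl⟩ := sq_dvd_and_cube_dvd_of_pow_five_dvd (V := V) prime_X hXU
      ⟨(X ^ 2 + 1) * d ^ 6, by linear_combination h⟩
    have hXd : (X : K[X]) ∣ d ^ 6 := by
      refine ⟨V ^ 2 - U ^ 3 - X * d ^ 6, mul_left_cancel₀ (pow_ne_zero 5 X_ne_zero) ?_⟩
      linear_combination -h
    exact prime_X.not_isUnit (hUd.isUnit_of_dvd' hXU (prime_X.dvd_of_dvd_pow hXd))
  have hVX : IsCoprime V X := (irreducible_X.coprime_iff_not_dvd.2 hXV).symm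
  exact hVX.pow_right.mul_right hVd.pow_right

theorem X_pow_mul_pow_dvd_differential {K : Type*} [Field K] {U V d : K[X]}
    (h : V ^ 2 = U ^ 3 + X ^ 5 * (X ^ 2 + 1) * d ^ 6) (hUd : IsCoprime U d) :
    X ^ 4 * d ^ 5 ∣ 3 * V * derivative U - 2 * U * derivative V := by
  refine (isCoprime_X_pow_mul_pow h hUd).symm.dvd_of_dvd_mul_left ?_
  rw [← three_mul_mul_derivative_sub_eq h]
  refine ⟨3 * (X * (X ^ 2 + 1) * d) * derivative U - ((7 * X ^ 2 + 5) * d +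
    6 * X * (X ^ 2 + 1) * derivative d) * U, ?_⟩
  simp only [derivative_mul, derivative_pow, derivative_X, derivative_add, derivative_one,
    map_natCast]
  push_cast
  ring

theorem pow_mul_pow_mul_mul_mem_range_derivative {F : Type*} [Field F] {N : ℕ} (hN : Odd N)
    [CharP F (6 * N + 1)] (V d : F[X]) (c : F) :
    V ^ (6 * N) * (X ^ 5 * (X ^ 2 + 1) * d ^ 6) ^ (5 * N) * (V * (C c * (X ^ 4 * d ^ 5))) ∈
      (derivative (R := F)).range := by
  have factor : V ^ (6 * N) * (X ^ 5 * (X ^ 2 + 1) * d ^ 6) ^ (5 * N) *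
      (V * (C c * (X ^ 4 * d ^ 5))) =
        c • ((X ^ 4 * d ^ 5 * V) ^ (6 * N + 1) * (X ^ N * (X ^ 2 + 1) ^ (5 * N))) := by
    rw [smul_eq_C_mul, mul_pow _ (d ^ 6), mul_pow _ (X ^ 2 + 1)]
    ring
  rw [factor]
  exact Submodule.smul_mem _ _ (pow_char_mul_mem_range_derivative _ _
    (X_pow_mul_X_sq_add_one_pow_mem_range_derivative hN))

section Degree

variable {R : Type*} [CommRing R] [IsDomain R]

theorem natDegree_X_pow_mul_X_sq_add_one_mul_pow {d : R[X]} (hd : d ≠ 0) :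
    (X ^ 5 * (X ^ 2 + 1) * d ^ 6).natDegree = 7 + 6 * d.natDegree := by
  have monic : (X ^ 5 * (X ^ 2 + 1) : R[X]).Monic := by monicity!
  have natDegree_eq : (X ^ 5 * (X ^ 2 + 1) : R[X]).natDegree = 7 := by compute_degree!
  rw [monic.natDegree_mul' (pow_ne_zero 6 hd), natDegree_eq, natDegree_pow]

theorem natDegree_X_pow_mul_pow {d : R[X]} (hd : d ≠ 0) :
    (X ^ 4 * d ^ 5).natDegree = 4 + 5 * d.natDegree := by
  rw [(monic_X_pow 4).natDegree_mul' (pow_ne_zero 5 hd), natDegree_X_pow, natDegree_pow]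

theorem lt_three_mul_natDegree_and_two_mul_natDegree_eq {U V d : R[X]} (hd : d ≠ 0)
    (h : V ^ 2 = U ^ 3 + X ^ 5 * (X ^ 2 + 1) * d ^ 6) :
    7 + 6 * d.natDegree < 3 * U.natDegree ∧ 2 * V.natDegree = 3 * U.natDegree := by
  have natDegree_A := natDegree_X_pow_mul_X_sq_add_one_mul_pow hd
  have natDegree_sq : (V ^ 2).natDegree = 2 * V.natDegree := natDegree_pow V 2
  have natDegree_cube : (U ^ 3).natDegree = 3 * U.natDegree := natDegree_pow U 3
  have lt : (X ^ 5 * (X ^ 2 + 1) * d ^ 6).natDegree < (U ^ 3).natDegree := by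
    by_contra! hle
    have := natDegree_add_eq_right_of_natDegree_lt
      (lt_of_le_of_ne hle (by omega : (U ^ 3).natDegree ≠ _))
    rw [← h] at this
    omega
  have := natDegree_add_eq_left_of_natDegree_lt lt
  rw [← h] at this
  omega

end Degree

/-- A polynomial model of a point of `E₁` whose differential has no zeros or poles beyond the
forced ones: `x = U / (t d)²` and `y = V / (t d)³` satisfy `t (3 y x' - 2 x y') = c`. The degree
of `U` is recorded because it does not follow from the equations in positive characteristic. -/
structure IsConstantDifferentialModel {R : Type*} [CommRing R] (U V d : R[X]) (c : R) : Prop where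
  d_ne_zero : d ≠ 0
  c_ne_zero : c ≠ 0
  natDegree_eq : U.natDegree = 2 * d.natDegree + 4
  equation : V ^ 2 = U ^ 3 + X ^ 5 * (X ^ 2 + 1) * d ^ 6
  differential : 3 * V * derivative U - 2 * U * derivative V = C c * (X ^ 4 * d ^ 5)

namespace IsConstantDifferentialModel

theorem exists_of_isCoprime {K : Type*} [Field K] [CharZero K] {U V d : K[X]} (hd : d ≠ 0)
    (h : V ^ 2 = U ^ 3 + X ^ 5 * (X ^ 2 + 1) * d ^ 6) (hUd : IsCoprime U d) :
    ∃ c : K, IsConstantDifferentialModel U V d c := by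
  obtain ⟨k, hk⟩ := X_pow_mul_pow_dvd_differential h hUd
  have natDegree_A := natDegree_X_pow_mul_X_sq_add_one_mul_pow hd
  obtain ⟨lt, natDegree_V⟩ := lt_three_mul_natDegree_and_two_mul_natDegree_eq hd h
  have hU₀ : U ≠ 0 := ne_zero_of_natDegree_gt (n := 0) (by omega)
  have hV₀ : V ≠ 0 := ne_zero_of_natDegree_gt (n := 0) (by omega)
  have natDegree_wronskian := natDegree_wronskian_of_natDegree_ne
    (ne_zero_of_natDegree_gt (n := 0) (by omega)) (pow_ne_zero 3 hU₀)
    (show (X ^ 5 * (X ^ 2 + 1) * d ^ 6).natDegree ≠ (U ^ 3).natDegree by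
      rw [natDegree_pow]; omega)
  rw [wronskian_cube_right, three_mul_mul_derivative_sub_eq h, hk, natDegree_A,
    natDegree_pow] at natDegree_wronskian
  have hk₀ : k ≠ 0 := by
    rintro rfl
    simp only [mul_zero, natDegree_zero] at natDegree_wronskian
    omega
  have hXd₀ : X ^ 4 * d ^ 5 ≠ 0 := mul_ne_zero (pow_ne_zero 4 X_ne_zero) (pow_ne_zero 5 hd)
  rw [natDegree_mul (pow_ne_zero 2 hU₀) (mul_ne_zero hV₀ (mul_ne_zero hXd₀ hk₀)),
    natDegree_mul hV₀ (mul_ne_zero hXd₀ hk₀), natDegree_mul hXd₀ hk₀,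
    natDegree_X_pow_mul_pow hd, natDegree_pow] at natDegree_wronskian
  obtain ⟨c, rfl⟩ := natDegree_eq_zero.1 (show k.natDegree = 0 by omega)
  exact ⟨c, hd, C_ne_zero.1 hk₀, by omega, h, by rw [hk, mul_comm]⟩

theorem of_map {R S : Type*} [CommRing R] [CommRing S] {f : R →+* S}
    (hf : Function.Injective f) {U V d : R[X]} {c : R}
    (h : IsConstantDifferentialModel (U.map f) (V.map f) (d.map f) (f c)) :
    IsConstantDifferentialModel U V d c where
  d_ne_zero := fun hd => h.d_ne_zero (by rw [hd, Polynomial.map_zero])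
  c_ne_zero := ne_zero_of_map h.c_ne_zero
  natDegree_eq := by simpa only [natDegree_map_eq_of_injective hf] using h.natDegree_eq
  equation := map_injective f hf (by simpa using h.equation)
  differential := map_injective f hf (by simpa [derivative_map] using h.differential)

theorem map {R S : Type*} [CommRing R] [CommRing S] {U V d : R[X]} {c : R}
    (h : IsConstantDifferentialModel U V d c) (f : R →+* S)
    (hf : f (U.leadingCoeff * d.leadingCoeff * c) ≠ 0) :
    IsConstantDifferentialModel (U.map f) (V.map f) (d.map f) (f c) := by
  rw [map_mul, map_mul] at hf
  have hU : f U.leadingCoeff ≠ 0 := left_ne_zero_of_mul (left_ne_zero_of_mul hf)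
  have hd : f d.leadingCoeff ≠ 0 := right_ne_zero_of_mul (left_ne_zero_of_mul hf)
  refine ⟨fun h₀ => hd ?_, right_ne_zero_of_mul hf, ?_, ?_, ?_⟩
  · rw [← leadingCoeff_map_of_leadingCoeff_ne_zero f hd, h₀, leadingCoeff_zero]
  · rw [natDegree_map_of_leadingCoeff_ne_zero f hU, natDegree_map_of_leadingCoeff_ne_zero f hd,
      h.natDegree_eq]
  · simpa using congrArg (Polynomial.map f) h.equation
  · simpa [derivative_map] using congrArg (Polynomial.map f) h.differential

theorem exists_charP {K : Type u} [Field K] [CharZero K] {U V d : K[X]} {c : K}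
    (h : IsConstantDifferentialModel U V d c) :
    ∃ M : ℕ, ∀ p : ℕ, p.Prime → M < p →
      ∃ (F : Type u) (_ : Field F) (_ : CharP F p) (U V d : F[X]) (c : F),
        IsConstantDifferentialModel U V d c := by
  classical
  obtain ⟨R, _, mem_lifts⟩ := exists_finiteType_subalgebra_forall_mem_lifts {U, V, d, C c}
  obtain ⟨U, rfl⟩ := mem_lifts U (by simp)
  obtain ⟨V, rfl⟩ := mem_lifts V (by simp)
  obtain ⟨d, rfl⟩ := mem_lifts d (by simp)
  obtain ⟨c, rfl⟩ : c ∈ Set.range (algebraMap R K) := by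
    simpa using (lifts_iff_coeff_lifts _).1 (mem_lifts (C c) (by simp)) 0
  replace h : IsConstantDifferentialModel U V d c := of_map Subtype.val_injective h
  have hU : U ≠ 0 := ne_zero_of_natDegree_gt (n := 0) (by have := h.natDegree_eq; omega)
  obtain ⟨M, hM⟩ := exists_ringHom_charP_map_ne_zero
    (mul_ne_zero (mul_ne_zero (leadingCoeff_ne_zero.2 hU) (leadingCoeff_ne_zero.2 h.d_ne_zero))
      h.c_ne_zero)
  refine ⟨M, fun p hp hMp => ?_⟩
  obtain ⟨F, _, _, ρ, hρ⟩ := hM p hp hMp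
  exact ⟨F, inferInstance, inferInstance, _, _, _, _, h.map ρ hρ⟩

theorem false_of_charP {F : Type*} [Field F] {N : ℕ} (hN : Odd N) (hp : (6 * N + 1).Prime)
    [CharP F (6 * N + 1)] {U V d : F[X]} {c : F} (h : IsConstantDifferentialModel U V d c) :
    False := by
  obtain ⟨hd₀, hc₀, natDegree_U, equation, differential⟩ := h
  set A : F[X] := X ^ 5 * (X ^ 2 + 1) * d ^ 6
  have hD := three_mul_mul_derivative_sub_eq equation
  rw [differential] at hD
  have exact_U := mul_pow_mul_mem_range_derivative hp equation hD.symm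
    (pow_mul_pow_mul_mul_mem_range_derivative hN V d c)
  have natDegree_A : A.natDegree = 7 + 6 * d.natDegree :=
    natDegree_X_pow_mul_X_sq_add_one_mul_pow hd₀
  have natDegree_V := (lt_three_mul_natDegree_and_two_mul_natDegree_eq hd₀ equation).2
  have hU₀ : U ≠ 0 := ne_zero_of_natDegree_gt (n := 0) (by omega)
  have hV₀ : V ≠ 0 := ne_zero_of_natDegree_gt (n := 0) (by omega)
  have hA₀ : A ≠ 0 := ne_zero_of_natDegree_gt (n := 0) (by omega)
  have hXd₀ : X ^ 4 * d ^ 5 ≠ 0 := mul_ne_zero (pow_ne_zero 4 X_ne_zero) (pow_ne_zero 5 hd₀)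
  have hD₀ : V * (C c * (X ^ 4 * d ^ 5)) ≠ 0 :=
    mul_ne_zero hV₀ (mul_ne_zero (C_ne_zero.2 hc₀) hXd₀)
  have hUA₀ : (U * A) ^ (6 * N) ≠ 0 := pow_ne_zero _ (mul_ne_zero hU₀ hA₀)
  have natDegree_eq : ((U * A) ^ (6 * N) * (V * (C c * (X ^ 4 * d ^ 5)))).natDegree + 1 =
      (6 * N + 1) * (8 * d.natDegree + 11) := by
    rw [natDegree_mul hUA₀ hD₀, natDegree_pow, natDegree_mul hU₀ hA₀,
      natDegree_mul hV₀ (right_ne_zero_of_mul hD₀), natDegree_C_mul hc₀,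
      natDegree_X_pow_mul_pow hd₀, natDegree_A, natDegree_U,
      show V.natDegree = 3 * d.natDegree + 6 by omega]
    ring
  refine natDegree_add_one_ne_zero_of_mem_range_derivative (mul_ne_zero hUA₀ hD₀) exact_U ?_
  rw [← Nat.cast_succ, Nat.succ_eq_add_one, natDegree_eq, Nat.cast_mul, CharP.cast_eq_zero,
    zero_mul]

end IsConstantDifferentialModel

end PolynomialModel

theorem stmt_0_general {K : Type*} [Field K] [CharZero K] :
    ¬ ∃ x y : RatFunc K, y ^ 2 = x ^ 3 + RatFunc.X + (RatFunc.X)⁻¹ := by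
  rintro ⟨x, y, hxy⟩
  obtain ⟨U₀, V₀, d₀, hd₀, h₀⟩ := exists_polynomial_solution hxy
  obtain ⟨U, V, d, hd, h, hUd⟩ := exists_isCoprime_of_sq_eq_cube_add hd₀ h₀
  obtain ⟨c, model⟩ := IsConstantDifferentialModel.exists_of_isCoprime hd h hUd
  obtain ⟨M, hM⟩ := model.exists_charP
  obtain ⟨p, hpM, hp, hp_mod⟩ := Nat.forall_exists_prime_gt_and_modEq M (q := 12) (a := 7)
    (by decide) (by decide)
  obtain ⟨N, hN, rfl⟩ : ∃ N, Odd N ∧ p = 6 * N + 1 := by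
    have : p % 12 = 7 := hp_mod
    exact ⟨p / 6, Nat.odd_iff.2 (by omega), by omega⟩
  obtain ⟨F, _, _, U', V', d', c', model'⟩ := hM _ hp hpM
  exact model'.false_of_charP hN hp

/-- The elliptic curve `E₁ : y² = x³ + t + t⁻¹` over `ℂ(t)` has trivial
Mordell–Weil group: there is no affine `ℂ(t)`-rational point, i.e. no pair
`(x, y) ∈ ℂ(t) × ℂ(t)` with `y² = x³ + t + t⁻¹`. -/
theorem stmt_0 :
    ¬ ∃ x y : RatFunc ℂ, y ^ 2 = x ^ 3 + RatFunc.X + (RatFunc.X)⁻¹ :=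
  stmt_0_general
end

section
/- Let E₂ be the elliptic curve over ℂ(t) given by y² = x³ + t² + t⁻², and let K₂ = ℚ(ζ₃, 2^{1/3}) ⊆ ℂ where ζ₃ = e^{2πi/3} and 2^{1/3} is the real cube root of 2. Then every affine ℂ(t)-rational point (x, y) of E₂ has both coordinates in the subfield K₂(t) of ℂ(t), i.e., x and y are rational functions in t all of whose coefficients lie in K₂. (Thus E₂(ℂ(t)) = E₂(K₂(t)), and K₂ is the splitting field of E₂ over ℚ(t).) -/
/-- The real cube root of `2`, viewed in `ℂ`. -/
noncomputable def cbrt2 : ℂ := ((2 : ℝ) ^ ((1 : ℝ) / 3) : ℝ)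

/-- `ζ₃ = e^{2πi/3}`. -/
noncomputable def ζ3 : ℂ := Complex.exp (2 * Real.pi * Complex.I / 3)

/-- `K₂ = ℚ(ζ₃, 2^{1/3})`, as a subfield of `ℂ` (any subfield of `ℂ` contains `ℚ`). -/
noncomputable def K2 : Subfield ℂ := Subfield.closure {ζ3, cbrt2}

/-- `f ∈ K(t)`: the rational function `f ∈ ℂ(t)` can be written as a quotient of two
polynomials all of whose coefficients lie in the subfield `K ⊆ ℂ`. -/
def memSubfieldRatFunc (K : Subfield ℂ) (f : RatFunc ℂ) : Prop :=
  ∃ p q : Polynomial ℂ, (∀ n, p.coeff n ∈ K) ∧ (∀ n, q.coeff n ∈ K) ∧ q ≠ 0 ∧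
    f = algebraMap (Polynomial ℂ) (RatFunc ℂ) p / algebraMap (Polynomial ℂ) (RatFunc ℂ) q

/-!
Write a solution `(x, y)` of `y² = x³ + X² + X⁻²` over `F(X)` as a point `P`, and let `P'` be its
image under `X ↦ -X`. The point `P + P'` is invariant, hence comes from a point of
`y² = x³ + X + X⁻¹`, and that curve has no point besides the one at infinity. So `x` is even and
`y` is odd, and `P` comes from the quadratic twist `y² = x³ + X²(X² + 1)`.

The curve `y² = x³ + f` with `f = X + X⁻¹` is isotrivial, so an affine point has a Manin derivative
`x' - x f' / (3 f)`, and counting zeros and degrees shows that it is a nonzero constant multiple of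
`y`, up to clearing denominators. In characteristic `p = 12 k + 5` this relation makes the `p`-th
power of the numerator of `y`, times a product of powers of `X` and `X² + 1`, a derivative; so a
coefficient of that product vanishes. But it is a central binomial coefficient prime to `p`.

On the twist, descend by `[√-3]`. The square root of `X²(X² + 1)` generates the function field of a
conic, and the only places of the conic that matter are `0` and `1`, up to the deck transformation.
The points modulo `[√-3]` are therefore generated by the points `(cX, X² ± X)` with `c³ = ±2`. If an
automorphism `σ` of `F` fixes the cube roots of unity and of `2`, then for every `P` there is a `Q`
with `σ P - P = [√-3] (σ Q - Q)`. Since `[√-3]` increases the height, infinite descent gives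
`σ P = P`: the coefficients of `P` are fixed by all such `σ`.
-/

open Polynomial

section Automorphisms

variable {K F : Type*} [Field K] [Field F] [Algebra K F] [IsAlgClosed F]

theorem exists_ringEquiv_comp_aeval_of_isTranscendenceBasis {ι : Type*} {v : ι → F}
    (hv : IsTranscendenceBasis K v) (e : MvPolynomial ι K ≃+* MvPolynomial ι K) :
    ∃ σ : F ≃+* F, ∀ p, σ (MvPolynomial.aeval v p) = MvPolynomial.aeval v (e p) := by
  have := IsAlgClosed.isAlgClosure_of_transcendence_basis v hv
  let e' : Algebra.adjoin K (Set.range v) ≃+* Algebra.adjoin K (Set.range v) :=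
    (hv.1.aevalEquiv.symm.toRingEquiv.trans e).trans hv.1.aevalEquiv.toRingEquiv
  refine ⟨IsAlgClosure.equivOfEquiv F F e', fun p => ?_⟩
  rw [← hv.1.algebraMap_aevalEquiv, ← hv.1.algebraMap_aevalEquiv,
    IsAlgClosure.equivOfEquiv_algebraMap]
  simp [e']

theorem exists_algEquiv_extending {M : Type*} [Field M] [Algebra K M] [Algebra M F]
    [IsScalarTower K M F] (τ : M ≃ₐ[K] M) :
    ∃ σ : F ≃ₐ[K] F, ∀ m : M, σ (algebraMap M F m) = algebraMap M F (τ m) := by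
  obtain ⟨s, hs⟩ := exists_isTranscendenceBasis M F
  obtain ⟨σ, hσ⟩ := exists_ringEquiv_comp_aeval_of_isTranscendenceBasis hs
    (MvPolynomial.mapEquiv s τ.toRingEquiv)
  have hσM (m : M) : σ (algebraMap M F m) = algebraMap M F (τ m) := by
    simpa using hσ (MvPolynomial.C m)
  refine ⟨AlgEquiv.ofRingEquiv (f := σ) fun a => ?_, hσM⟩
  rw [IsScalarTower.algebraMap_apply K M F, hσM, τ.commutes]

theorem exists_algEquiv_ne_of_isAlgebraic [PerfectField K] {z : F} (hz : IsAlgebraic K z)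
    (hzK : z ∉ (algebraMap K F).range) : ∃ σ : F ≃ₐ[K] F, σ z ≠ z := by
  have : IsAlgClosure K (algebraicClosure K F) := inferInstance
  obtain ⟨τ, hτ⟩ : ∃ τ : algebraicClosure K F ≃ₐ[K] algebraicClosure K F,
      τ ⟨z, mem_algebraicClosure_iff.2 hz⟩ ≠ ⟨z, mem_algebraicClosure_iff.2 hz⟩ := by
    by_contra! hfixed
    obtain ⟨a, ha⟩ := (InfiniteGalois.mem_range_algebraMap_iff_fixed (k := K) _).2 hfixed
    exact hzK ⟨a, congrArg Subtype.val ha⟩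
  obtain ⟨σ, hσ⟩ := exists_algEquiv_extending (F := F) τ
  exact ⟨σ, fun h => hτ (Subtype.ext ((hσ ⟨z, _⟩).symm.trans h))⟩

theorem exists_algEquiv_ne_of_transcendental {z : F} (hz : Transcendental K z) :
    ∃ σ : F ≃ₐ[K] F, σ z ≠ z := by
  have hind : AlgebraicIndepOn K id ({z} : Set F) :=
    algebraicIndependent_unique_type_iff.2 (by simpa using hz)
  obtain ⟨s, hzs, hs⟩ := exists_isTranscendenceBasis_superset hind
  let shift : MvPolynomial s K ≃ₐ[K] MvPolynomial s K :=
    AlgEquiv.ofAlgHom (MvPolynomial.aeval fun i => MvPolynomial.X i + 1)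
      (MvPolynomial.aeval fun i => MvPolynomial.X i - 1) (by ext; simp) (by ext; simp)
  obtain ⟨σ, hσ⟩ := exists_ringEquiv_comp_aeval_of_isTranscendenceBasis hs shift.toRingEquiv
  refine ⟨AlgEquiv.ofRingEquiv (f := σ) fun a => by simpa [shift] using hσ (MvPolynomial.C a), ?_⟩
  have hσz : σ z = z + 1 := by simpa [shift] using hσ (MvPolynomial.X ⟨z, hzs rfl⟩)
  simp [hσz]

theorem mem_range_algebraMap_of_forall_algEquiv_eq [PerfectField K] {z : F}
    (hz : ∀ σ : F ≃ₐ[K] F, σ z = z) : z ∈ (algebraMap K F).range := by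
  by_contra hzK
  obtain ⟨σ, hσ⟩ : ∃ σ : F ≃ₐ[K] F, σ z ≠ z := by
    by_cases halg : IsAlgebraic K z
    · exact exists_algEquiv_ne_of_isAlgebraic halg hzK
    · exact exists_algEquiv_ne_of_transcendental halg
  exact hσ (hz σ)

end Automorphisms

section MapCoeff

variable {K F E : Type*} [Field K] [Field F] [Field E]

/-- The action of a field homomorphism on the coefficients of rational functions. -/
noncomputable def mapCoeff (σ : K →+* F) : RatFunc K →+* RatFunc F :=
  RatFunc.mapRingHom (mapRingHom σ)
    (nonZeroDivisors_le_comap_nonZeroDivisors_of_injective _ (map_injective σ σ.injective))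

theorem mapCoeff_div (σ : K →+* F) (p q : K[X]) :
    mapCoeff σ (algebraMap _ _ p / algebraMap _ _ q) =
      algebraMap _ _ (p.map σ) / algebraMap _ _ (q.map σ) :=
  RatFunc.map_apply_div (mapRingHom σ)
    (nonZeroDivisors_le_comap_nonZeroDivisors_of_injective _ (map_injective σ σ.injective)) p q

@[simp]
theorem mapCoeff_algebraMap (σ : K →+* F) (p : K[X]) :
    mapCoeff σ (algebraMap _ _ p) = algebraMap _ _ (p.map σ) := by
  simpa using mapCoeff_div σ p 1

@[simp]
theorem mapCoeff_X (σ : K →+* F) : mapCoeff σ RatFunc.X = RatFunc.X := by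
  simpa using mapCoeff_algebraMap σ X

@[simp]
theorem mapCoeff_C (σ : K →+* F) (a : K) : mapCoeff σ (RatFunc.C a) = RatFunc.C (σ a) := by
  simpa using mapCoeff_algebraMap σ (C a)

theorem map_num_eq_and_map_denom_eq_of_mapCoeff_eq {σ : F →+* F} {f : RatFunc F}
    (hf : mapCoeff σ f = f) : f.num.map σ = f.num ∧ f.denom.map σ = f.denom := by
  have hdenom' : f.denom.map σ ≠ 0 := (Polynomial.map_ne_zero_iff σ.injective).2 f.denom_ne_zero
  have hcross : f.num.map σ * f.denom = f.num * f.denom.map σ := by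
    rw [eq_comm, ← RatFunc.num_div_denom f, mapCoeff_div, RatFunc.num_div_denom] at hf
    exact (RatFunc.num_mul_eq_mul_denom_iff hdenom').2 hf |>.symm
  have hcoprime' : IsCoprime (f.num.map σ) (f.denom.map σ) :=
    f.isCoprime_num_denom.map (mapRingHom σ)
  have hdenom : f.denom.map σ = f.denom :=
    eq_of_monic_of_associated (f.monic_denom.map σ) f.monic_denom <| associated_of_dvd_dvd
      (hcoprime'.symm.dvd_of_dvd_mul_left ⟨f.num, by rw [hcross, mul_comm]⟩)
      (f.isCoprime_num_denom.symm.dvd_of_dvd_mul_left ⟨f.num.map σ, by rw [← hcross, mul_comm]⟩)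
  exact ⟨mul_right_cancel₀ f.denom_ne_zero (by rw [hcross, hdenom]), hdenom⟩

theorem mem_range_mapCoeff_of_forall_algEquiv_eq [Algebra K F] [IsAlgClosed F] [PerfectField K]
    {f : RatFunc F} (hf : ∀ σ : F ≃ₐ[K] F, mapCoeff (σ : F →+* F) f = f) :
    f ∈ (mapCoeff (algebraMap K F)).range := by
  have hlifts {p : F[X]} (hp : ∀ σ : F ≃ₐ[K] F, p.map (σ : F →+* F) = p) :
      p ∈ lifts (algebraMap K F) :=
    (lifts_iff_coeff_lifts p).2 fun n =>
      mem_range_algebraMap_of_forall_algEquiv_eq fun σ => by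
        simpa using congrArg (coeff · n) (hp σ)
  obtain ⟨p, hp⟩ := hlifts fun σ => (map_num_eq_and_map_denom_eq_of_mapCoeff_eq (hf σ)).1
  obtain ⟨q, hq⟩ := hlifts fun σ => (map_num_eq_and_map_denom_eq_of_mapCoeff_eq (hf σ)).2
  refine ⟨algebraMap _ _ p / algebraMap _ _ q, ?_⟩
  rw [mapCoeff_div, ← coe_mapRingHom, hp, hq, RatFunc.num_div_denom]

end MapCoeff

section Spreading

universe u

theorem exists_nat_forall_prime_exists_ringHom_charP (S : Type u) [CommRing S] [Nontrivial S]
    [Module.Flat ℤ S] [Algebra.FiniteType ℤ S] :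
    ∃ n : ℕ, ∀ p > n, p.Prime →
      ∃ (k : Type u) (_ : Field k) (_ : CharP k p), Nonempty (S →+* k) := by
  have : Algebra.FinitePresentation ℤ S := Algebra.FinitePresentation.of_finiteType.1 ‹_›
  let π : PrimeSpectrum S → PrimeSpectrum ℤ := PrimeSpectrum.comap (algebraMap ℤ S)
  have hπ : IsOpen (Set.range π) :=
    PrimeSpectrum.isOpenMap_comap_of_hasGoingDown_of_finitePresentation.isOpen_range
  obtain ⟨_, ⟨m, rfl⟩, hq, hmπ⟩ :=
    PrimeSpectrum.isTopologicalBasis_basic_opens.exists_subset_of_mem_open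
      (Set.mem_range_self (Classical.arbitrary (PrimeSpectrum S))) hπ
  have hm : m ≠ 0 := fun h => hq (h ▸ Ideal.zero_mem _)
  refine ⟨m.natAbs, fun p hmp hp => ?_⟩
  let P : PrimeSpectrum ℤ :=
    ⟨Ideal.span {(p : ℤ)}, (Ideal.span_singleton_prime (by exact_mod_cast hp.ne_zero)).2
      (Nat.prime_iff_prime_int.1 hp)⟩
  have hmP : m ∉ P.asIdeal := fun h =>
    hmp.not_ge <| Nat.le_of_dvd (Int.natAbs_pos.2 hm) <|
      Int.natCast_dvd.1 (Ideal.mem_span_singleton.1 h)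
  obtain ⟨Q, hQ⟩ := hmπ hmP
  have hpQ : (p : S) ∈ Q.asIdeal := by
    have : (p : ℤ) ∈ (π Q).asIdeal := hQ ▸ Ideal.mem_span_singleton_self _
    simpa [π] using this
  refine ⟨Q.asIdeal.ResidueField, inferInstance, (CharP.charP_iff_prime_eq_zero hp).2 ?_,
    ⟨algebraMap S _⟩⟩
  rw [← map_natCast (algebraMap S _)]
  exact Ideal.algebraMap_residueField_eq_zero.2 hpQ

end Spreading

theorem coeff_X_mul_derivative {R : Type*} [CommRing R] (P : R[X]) (n : ℕ) :
    (X * derivative P).coeff n = n * P.coeff n := by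
  cases n with
  | zero => simp
  | succ n => rw [coeff_X_mul, coeff_derivative, Nat.cast_succ, mul_comm]

section CharP

variable {k : Type*} [Field k] {p : ℕ}

theorem contract_X_mul_derivative {R : Type*} [CommRing R] [CharP R p] (hp : p ≠ 0) (G : R[X]) :
    contract p (X * derivative G) = 0 := by
  ext n
  rw [coeff_contract hp, coeff_X_mul_derivative, Nat.cast_mul, CharP.cast_eq_zero R p, mul_zero,
    zero_mul, coeff_zero]

theorem coeff_eq_zero_of_derivative_eq_pow_mul [CharP k p] [Fact p.Prime] {G H Q : k[X]}
    (hH : H ≠ 0) (hG : derivative G = H ^ p * Q) : Q.coeff (p - 1) = 0 := by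
  have hp : p ≠ 0 := NeZero.ne p
  have hcontract : contract p (X * Q) * H.map (frobenius k p) = 0 := by
    rw [← contract_mul_expand hp, ← map_expand, map_frobenius_expand, mul_assoc, mul_comm Q, ← hG,
      contract_X_mul_derivative hp]
  have hXQ := (mul_eq_zero.1 hcontract).resolve_right <|
    (Polynomial.map_ne_zero_iff (frobenius_inj k p)).2 hH
  rw [← coeff_X_mul, Nat.sub_add_cancel (NeZero.pos p), ← one_mul p, ← coeff_contract hp,
    hXQ, coeff_zero]

end CharP

theorem coeff_X_pow_mul_X_sq_add_one_pow {R : Type*} [CommSemiring R] (m s : ℕ) :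
    (X ^ m * (X ^ 2 + 1) ^ (2 * s) : R[X]).coeff (2 * s + m) = s.centralBinom := by
  have : ((X : R[X]) ^ 2 + 1) ^ (2 * s) = expand R 2 ((X + 1) ^ (2 * s)) := by simp
  rw [coeff_X_pow_mul, this, mul_comm, coeff_expand_mul two_pos, mul_comm, coeff_X_add_one_pow,
    Nat.centralBinom]

/-- The Manin map of `y² = x³ + f`, `f = X + X⁻¹`, with denominators cleared: at the point
`(A / (X² B²), D / (X³ B³))`, the expression `x' - x f' / (3 f)` is
`maninNumerator A B / (3 X³ (X² + 1) B³)`. -/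
noncomputable def maninNumerator {R : Type*} [CommRing R] (A B : R[X]) : R[X] :=
  3 * X * (X ^ 2 + 1) * (derivative A * B - 2 * A * derivative B) - A * B * (7 * X ^ 2 + 5)

theorem map_maninNumerator {R S : Type*} [CommRing R] [CommRing S] (f : R →+* S) (A B : R[X]) :
    (maninNumerator A B).map f = maninNumerator (A.map f) (B.map f) := by
  simp [maninNumerator, derivative_map]

section CharP

variable {k : Type*} [Field k] {p r s : ℕ} [CharP k p]

theorem three_mul_derivative_eq_mul_maninNumerator (hp : p = 6 * r + 5) {i j : ℕ}
    (hij : i + j = 3 * r + 2) (A B : k[X]) :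
    3 * derivative (A ^ (3 * j + 1) * B ^ (6 * i + 1) * X ^ (5 * i + 5 * r + 5)
      * (X ^ 2 + 1) ^ (i + r + 1)) =
    ((3 * j + 1 : ℕ) : k[X]) * (A ^ (3 * j) * B ^ (6 * i) * X ^ (5 * i + 5 * r + 4)
      * (X ^ 2 + 1) ^ (i + r)) * maninNumerator A B := by
  have hp0 : (6 * r + 5 : k[X]) = 0 := by simpa [hp] using CharP.cast_eq_zero k[X] p
  have hi : (i : k[X]) = 3 * r + 2 - j := by
    have : (i + j : k[X]) = 3 * r + 2 := by exact_mod_cast congrArg (Nat.cast : ℕ → k[X]) hij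
    rw [← this, add_sub_cancel_right]
  have hpow : 5 * i + 5 * r + 5 - 1 = 5 * i + 5 * r + 4 := rfl
  simp only [maninNumerator, derivative_mul, derivative_pow, derivative_add, derivative_X,
    derivative_one, Nat.add_sub_cancel, map_natCast, hpow]
  push_cast
  rw [hi, pow_succ A, pow_succ B, pow_succ X (5 * i + 5 * r + 4), pow_succ (X ^ 2 + 1 : k[X])]
  linear_combination hp0 * (A ^ (3 * j) * B ^ (6 * i) * X ^ (5 * i + 5 * r + 4)
      * (X ^ 2 + 1) ^ (i + r)) * (9 * A * derivative B * X * (X ^ 2 + 1)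
       + A * B * (14 * X ^ 2 + 10))

/- In `D ^ p * (C c * _) = (D ^ 2) ^ ((p - 1) / 2) * (_ * maninNumerator A B)`, each term of the
binomial expansion of `(D ^ 2) ^ ((p - 1) / 2)` has an explicit antiderivative since `p = 0`. -/
theorem exists_derivative_eq_pow_mul (hp : p = 6 * r + 5) {A B D : k[X]} {c : k}
    (hD : D ^ 2 = A ^ 3 + X ^ 5 * (X ^ 2 + 1) * B ^ 6) (hN : maninNumerator A B = C c * D) :
    ∃ G : k[X], derivative G = D ^ p * (C c * (X ^ (5 * r + 4) * (X ^ 2 + 1) ^ r)) := by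
  have cast_ne_zero (j : ℕ) (hj : j ≤ 3 * r + 2) : ((3 * j + 1 : ℕ) : k) ≠ 0 := by
    rw [Ne, CharP.cast_eq_zero_iff k p, hp]
    rintro ⟨q, hq⟩
    have hq2 : q < 2 := by nlinarith
    interval_cases q <;> lia
  let coef (j : ℕ) : k := (3 * r + 2).choose j / (3 * j + 1 : ℕ)
  let term (m : ℕ × ℕ) : k[X] := A ^ (3 * m.1 + 1) * B ^ (6 * m.2 + 1) *
    X ^ (5 * m.2 + 5 * r + 5) * (X ^ 2 + 1) ^ (m.2 + r + 1)
  refine ⟨∑ m ∈ Finset.HasAntidiagonal.antidiagonal (3 * r + 2), C (coef m.1) * (3 * term m), ?_⟩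
  have hpow : D ^ p = D * (D ^ 2) ^ (3 * r + 2) := by
    rw [← pow_mul, ← pow_succ', hp]
    congr 1
    ring
  have hfactor : D ^ p * (C c * (X ^ (5 * r + 4) * (X ^ 2 + 1) ^ r)) =
      (A ^ 3 + X ^ 5 * (X ^ 2 + 1) * B ^ 6) ^ (3 * r + 2) *
        (X ^ (5 * r + 4) * (X ^ 2 + 1) ^ r * maninNumerator A B) := by
    rw [hpow, hD, hN]
    ring
  rw [hfactor, (Commute.all _ _).add_pow', derivative_sum, Finset.sum_mul]
  refine Finset.sum_congr rfl fun m hm => ?_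
  rw [Finset.HasAntidiagonal.mem_antidiagonal] at hm
  have hcoef : C (coef m.1) * ((3 * m.1 + 1 : ℕ) : k[X]) = ((3 * r + 2).choose m.1 : k[X]) := by
    rw [← C_eq_natCast, ← C_mul, div_mul_cancel₀ _ (cast_ne_zero m.1 (by lia)), C_eq_natCast]
  have hderiv := three_mul_derivative_eq_mul_maninNumerator hp (by lia : m.2 + m.1 = _) A B
  rw [derivative_C_mul, ← C_ofNat, derivative_C_mul, C_ofNat, hderiv, ← mul_assoc, ← mul_assoc,
    hcoef, nsmul_eq_mul, mul_pow (X ^ 5 * (X ^ 2 + 1)), mul_pow (X ^ 5)]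
  ring

theorem maninNumerator_eq_zero_of_charP [Fact p.Prime] (hp : p = 6 * r + 5) (hr : r = 2 * s)
    {A B D : k[X]} {c : k} (hD : D ^ 2 = A ^ 3 + X ^ 5 * (X ^ 2 + 1) * B ^ 6)
    (hN : maninNumerator A B = C c * D) : maninNumerator A B = 0 := by
  by_contra hne
  obtain ⟨hc, hD0⟩ := mul_ne_zero_iff.1 (hN ▸ hne)
  obtain ⟨G, hG⟩ := exists_derivative_eq_pow_mul hp hD hN
  have hcoeff := coeff_eq_zero_of_derivative_eq_pow_mul hD0 hG
  have hindex : p - 1 = 2 * s + (5 * r + 4) := by lia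
  rw [coeff_C_mul, hindex, hr, coeff_X_pow_mul_X_sq_add_one_pow, mul_eq_zero, ← C_eq_zero,
    or_iff_right hc, CharP.cast_eq_zero_iff k p] at hcoeff
  exact ((Fact.out : p.Prime).factorization_pos_of_dvd (Nat.centralBinom_ne_zero s) hcoeff).ne'
    (Nat.factorization_centralBinom_eq_zero_of_two_mul_lt (by lia))

end CharP

theorem not_isUnit_coeff_maninNumerator {S : Type*} [CommRing S] [Nontrivial S] [Module.Flat ℤ S]
    [Algebra.FiniteType ℤ S] {A B D : S[X]} {c : S}
    (hD : D ^ 2 = A ^ 3 + X ^ 5 * (X ^ 2 + 1) * B ^ 6) (hN : maninNumerator A B = C c * D) (m : ℕ) :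
    ¬ IsUnit ((maninNumerator A B).coeff m) := by
  intro hunit
  obtain ⟨n, hn⟩ := exists_nat_forall_prime_exists_ringHom_charP S
  obtain ⟨p, hnp, hp, hp5⟩ := Nat.forall_exists_prime_gt_and_eq_mod (q := 12) (a := 5) (by decide) n
  obtain ⟨k, _, _, ⟨f⟩⟩ := hn p hnp hp
  have : Fact p.Prime := ⟨hp⟩
  have hp12 : p % 12 = 5 := (ZMod.natCast_eq_natCast_iff' p 5 12).1 hp5
  have hzero := maninNumerator_eq_zero_of_charP (k := k) (r := 2 * (p / 12)) (by lia) rfl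
    (by simpa using congrArg (Polynomial.map f) hD)
    (by simpa [map_maninNumerator] using congrArg (Polynomial.map f) hN)
  refine (hunit.map f).ne_zero ?_
  rw [← coeff_map, map_maninNumerator, hzero, coeff_zero]

theorem maninNumerator_ne_C_mul {F : Type*} [Field F] [CharZero F] {A B D : F[X]} {c : F}
    (hD : D ^ 2 = A ^ 3 + X ^ 5 * (X ^ 2 + 1) * B ^ 6) (hN : maninNumerator A B ≠ 0) :
    maninNumerator A B ≠ C c * D := by
  classical
  intro hc
  let lead := (maninNumerator A B).leadingCoeff
  let G : Finset F := A.coeffs ∪ B.coeffs ∪ D.coeffs ∪ {c, lead⁻¹}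
  let S := Algebra.adjoin ℤ (G : Set F)
  have : Algebra.FiniteType ℤ S := (Subalgebra.fg_iff_finiteType _).1 ⟨G, rfl⟩
  have hinj : Function.Injective (algebraMap S F) := FaithfulSMul.algebraMap_injective S F
  have hmap_inj := Polynomial.map_injective _ hinj
  have hG {a : F} (ha : a ∈ G) : ∃ a' : S, algebraMap S F a' = a :=
    ⟨⟨a, Algebra.subset_adjoin ha⟩, rfl⟩
  have hlift {P : F[X]} (hP : P.coeffs ⊆ G) : ∃ P' : S[X], P'.map (algebraMap S F) = P :=
    (mem_lifts P).1 <| (lifts_iff_coeffs_subset_range P).2 fun a ha => hG (hP ha)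
  obtain ⟨A', hA⟩ := hlift (P := A) (by grind)
  obtain ⟨B', hB⟩ := hlift (P := B) (by grind)
  obtain ⟨D', hD'⟩ := hlift (P := D) (by grind)
  obtain ⟨c', hc'⟩ := hG (a := c) (by simp [G])
  obtain ⟨l, hl⟩ := hG (a := lead⁻¹) (by simp [G])
  have hcoeff : l * (maninNumerator A' B').coeff (maninNumerator A B).natDegree = 1 := by
    apply hinj
    rw [map_mul, hl, ← coeff_map, map_maninNumerator, hA, hB, coeff_natDegree, map_one,
      inv_mul_cancel₀ (leadingCoeff_ne_zero.2 hN)]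
  have hD'' : D' ^ 2 = A' ^ 3 + X ^ 5 * (X ^ 2 + 1) * B' ^ 6 :=
    hmap_inj (by simpa [hA, hB, hD'] using hD)
  have hN' : maninNumerator A' B' = C c' * D' :=
    hmap_inj (by simpa [map_maninNumerator, hA, hB, hD', hc'] using hc)
  exact not_isUnit_coeff_maninNumerator hD'' hN' _ (IsUnit.of_mul_eq_one_right l hcoeff)

section NormalForm

variable {F : Type*} [Field F]

theorem exists_denom_eq_sq_and_denom_eq_cube {x y : RatFunc F} {f : F[X]}
    (h : y ^ 2 = x ^ 3 + algebraMap _ _ f) :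
    ∃ B : F[X], B ≠ 0 ∧ x.denom = B ^ 2 ∧ y.denom = B ^ 3 := by
  have hx0 := x.denom_ne_zero
  have hcross : y.num ^ 2 * x.denom ^ 3 = y.denom ^ 2 * (x.num ^ 3 + f * x.denom ^ 3) := by
    have hx1 : algebraMap _ (RatFunc F) x.denom ≠ 0 := by simpa using hx0
    have hy1 : algebraMap _ (RatFunc F) y.denom ≠ 0 := by simpa using y.denom_ne_zero
    rw [← x.num_div_denom, ← y.num_div_denom] at h
    field_simp at h
    apply RatFunc.algebraMap_injective
    simp only [map_mul, map_pow, map_add]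
    linear_combination h
  have hdvd : y.denom ^ 2 ∣ x.denom ^ 3 :=
    y.isCoprime_num_denom.symm.pow.dvd_of_dvd_mul_left ⟨_, hcross⟩
  have hdvd' : x.denom ^ 3 ∣ y.denom ^ 2 := by
    have hcop : IsCoprime (x.denom ^ 3) (x.num ^ 3 + x.denom ^ 3 * f) :=
      (x.isCoprime_num_denom.symm.pow (m := 3) (n := 3)).add_mul_left_right f
    refine hcop.dvd_of_dvd_mul_right ⟨y.num ^ 2, ?_⟩
    rw [mul_comm _ f, ← hcross, mul_comm]
  have hpow : y.denom ^ 2 = x.denom ^ 3 := eq_of_monic_of_associated (y.monic_denom.pow 2)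
    (x.monic_denom.pow 3) (associated_of_dvd_dvd hdvd hdvd')
  obtain ⟨B, hB⟩ : x.denom ∣ y.denom :=
    (IsIntegrallyClosed.pow_dvd_pow_iff two_ne_zero).1
      ((pow_dvd_pow x.denom (Nat.le_succ 2)).trans hpow.symm.dvd)
  have hBx : x.denom = B ^ 2 := by
    apply mul_left_cancel₀ (pow_ne_zero 2 hx0)
    linear_combination -hpow + (y.denom + x.denom * B) * hB
  exact ⟨B, by rintro rfl; simp [hx0] at hBx, hBx, by rw [hB, hBx]; ring⟩

theorem exists_num_sq_eq_num_cube_add {x y : RatFunc F} {f : F[X]}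
    (h : y ^ 2 = x ^ 3 + algebraMap _ _ f) :
    ∃ B : F[X], B ≠ 0 ∧ x.denom = B ^ 2 ∧ IsCoprime x.num B ∧
      y.num ^ 2 = x.num ^ 3 + f * B ^ 6 := by
  obtain ⟨B, hB, hx, hy⟩ := exists_denom_eq_sq_and_denom_eq_cube h
  refine ⟨B, hB, hx, (IsCoprime.pow_right_iff two_pos).1 (hx ▸ x.isCoprime_num_denom), ?_⟩
  have hB' : algebraMap _ (RatFunc F) B ≠ 0 := by simpa using hB
  rw [← x.num_div_denom, ← y.num_div_denom, hx, hy, map_pow, map_pow] at h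
  field_simp at h
  apply RatFunc.algebraMap_injective
  simp only [map_mul, map_pow, map_add]
  linear_combination h

end NormalForm

section Leading

variable {R : Type*} [CommRing R]

theorem natDegree_X_mul_derivative_le (P : R[X]) : (X * derivative P).natDegree ≤ P.natDegree :=
  natDegree_le_iff_coeff_eq_zero.2 fun n hn => by
    rw [coeff_X_mul_derivative, coeff_eq_zero_of_natDegree_lt hn, mul_zero]

theorem maninNumerator_eq (A B : R[X]) : maninNumerator A B =
    (X * derivative A * B - 2 * (A * (X * derivative B))) * (3 * X ^ 2 + 3) -
      A * B * (7 * X ^ 2 + 5) := by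
  rw [maninNumerator]
  ring

theorem natDegree_X_mul_derivative_mul_sub_le (A B : R[X]) :
    (X * derivative A * B - 2 * (A * (X * derivative B))).natDegree ≤
      A.natDegree + B.natDegree := by
  refine (natDegree_sub_le _ _).trans
    (max_le (natDegree_mul_le_of_le (natDegree_X_mul_derivative_le A) le_rfl) ?_)
  rw [← C_ofNat]
  exact (natDegree_C_mul_le _ _).trans
    (natDegree_mul_le_of_le le_rfl (natDegree_X_mul_derivative_le B))

theorem natDegree_maninNumerator_le (A B : R[X]) :
    (maninNumerator A B).natDegree ≤ A.natDegree + B.natDegree + 2 := by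
  rw [maninNumerator_eq, ← max_self (A.natDegree + B.natDegree + 2)]
  exact natDegree_sub_le_of_le
    (natDegree_mul_le_of_le (natDegree_X_mul_derivative_mul_sub_le A B) (by compute_degree))
    (natDegree_mul_le_of_le (natDegree_mul_le_of_le le_rfl le_rfl) (by compute_degree))

theorem coeff_maninNumerator (A B : R[X]) :
    (maninNumerator A B).coeff (A.natDegree + B.natDegree + 2) =
      (3 * A.natDegree - 6 * B.natDegree - 7) * (A.leadingCoeff * B.leadingCoeff) := by
  have h3 : (3 * X ^ 2 + 3 : R[X]).coeff 2 = 3 := by compute_degree!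
  have h7 : (7 * X ^ 2 + 5 : R[X]).coeff 2 = 7 := by compute_degree!
  rw [maninNumerator_eq, coeff_sub,
    coeff_mul_add_eq_of_natDegree_le (natDegree_X_mul_derivative_mul_sub_le A B)
      (by compute_degree),
    coeff_mul_add_eq_of_natDegree_le (natDegree_mul_le_of_le le_rfl le_rfl) (by compute_degree),
    coeff_sub, coeff_ofNat_mul,
    coeff_mul_add_eq_of_natDegree_le (natDegree_X_mul_derivative_le A) le_rfl,
    coeff_mul_add_eq_of_natDegree_le le_rfl (natDegree_X_mul_derivative_le B),
    coeff_mul_add_eq_of_natDegree_le le_rfl le_rfl,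
    coeff_X_mul_derivative, coeff_X_mul_derivative, h3, h7]
  simp only [coeff_natDegree]
  ring

end Leading

section PolynomialEquation

variable {F : Type*} [Field F] {A B D : F[X]}

theorem two_mul_ne_min_three_mul_five {a d : ℕ∞} (ha : 1 ≤ a) : 2 * d ≠ min (3 * a) 5 := by
  intro h
  have hd : 2 * d ≤ 5 := h.le.trans (min_le_right _ _)
  cases d with
  | top => simp at hd
  | coe d =>
    rcases min_choice (3 * a) 5 with h' | h' <;> rw [h'] at h <;> clear h'
    · cases a with
      | top => norm_cast at h
      | coe a => norm_cast at *; lia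
    · norm_cast at h
      lia

theorem not_X_dvd_of_sq_eq_cube_add (hAB : IsCoprime A B)
    (hD : D ^ 2 = A ^ 3 + X ^ 5 * (X ^ 2 + 1) * B ^ 6) : ¬ X ∣ A := by
  intro hXA
  have hXB : ¬ X ∣ B := fun hXB => prime_X.not_isUnit (hAB.isUnit_of_dvd' hXA hXB)
  have hX1 : ¬ (X : F[X]) ∣ X ^ 2 + 1 := by simp [X_dvd_iff]
  have hX : emultiplicity X (X ^ 5 * (X ^ 2 + 1) * B ^ 6) = 5 := by
    rw [emultiplicity_mul prime_X, emultiplicity_mul prime_X,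
      emultiplicity_pow_self X_ne_zero prime_X.not_isUnit, emultiplicity_eq_zero.2 hX1,
      emultiplicity_eq_zero.2 (mt prime_X.dvd_of_dvd_pow hXB)]
    rfl
  have hA : emultiplicity X (A ^ 3) = 3 * emultiplicity X A := emultiplicity_pow prime_X
  have hne : emultiplicity X (A ^ 3) ≠ emultiplicity X (X ^ 5 * (X ^ 2 + 1) * B ^ 6) := by
    rw [hA, hX]
    generalize emultiplicity X A = a
    cases a <;> norm_cast
    lia
  have hmin := emultiplicity_add_eq_min hne
  rw [← hD, hX, hA, emultiplicity_pow prime_X] at hmin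
  exact two_mul_ne_min_three_mul_five (Order.one_le_iff_pos.2 (emultiplicity_pos_of_dvd hXA)) hmin

theorem dvd_sq_mul_maninNumerator (hD : D ^ 2 = A ^ 3 + X ^ 5 * (X ^ 2 + 1) * B ^ 6) :
    D ∣ A ^ 2 * maninNumerator A B := by
  refine ⟨2 * X * (X ^ 2 + 1) * B * derivative D - 6 * X * (X ^ 2 + 1) * derivative B * D
    - B * (7 * X ^ 2 + 5) * D, ?_⟩
  have hderiv := congrArg derivative hD
  simp only [derivative_pow, derivative_mul, derivative_add, derivative_X, derivative_one,
    map_ofNat, Nat.cast_ofNat] at hderiv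
  rw [maninNumerator]
  linear_combination (-X * (X ^ 2 + 1) * B) * hderiv + (6 * X * (X ^ 2 + 1) * derivative B
      + B * (7 * X ^ 2 + 5)) * hD

theorem natDegree_of_sq_eq_cube_add (hB : B ≠ 0)
    (hD : D ^ 2 = A ^ 3 + X ^ 5 * (X ^ 2 + 1) * B ^ 6) :
    2 * D.natDegree = 3 * A.natDegree ∧ 7 + 6 * B.natDegree < 3 * A.natDegree := by
  have hdeg : (X ^ 5 * (X ^ 2 + 1) * B ^ 6).natDegree = 7 + 6 * B.natDegree := by
    have h7 : ((X : F[X]) ^ 5 * (X ^ 2 + 1)).natDegree = 7 := by compute_degree!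
    rw [natDegree_mul (ne_zero_of_natDegree_gt (n := 0) (by lia)) (pow_ne_zero _ hB), h7,
      natDegree_pow]
  have hA : (A ^ 3).natDegree = 3 * A.natDegree := natDegree_pow _ _
  have hD2 : (D ^ 2).natDegree = 2 * D.natDegree := natDegree_pow _ _
  rcases lt_trichotomy (A ^ 3).natDegree (X ^ 5 * (X ^ 2 + 1) * B ^ 6).natDegree with h | h | h
  · have := natDegree_add_eq_right_of_natDegree_lt h
    rw [← hD] at this
    lia
  · lia
  · have := natDegree_add_eq_left_of_natDegree_lt h
    rw [← hD] at this
    lia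

variable [CharZero F]

theorem squarefree_X_sq_add_one : Squarefree (X ^ 2 + 1 : F[X]) := by
  simpa using (separable_X_pow_sub_C (-1 : F) two_ne_zero (neg_ne_zero.2 one_ne_zero)).squarefree

theorem isCoprime_of_sq_eq_cube_add (hAB : IsCoprime A B)
    (hD : D ^ 2 = A ^ 3 + X ^ 5 * (X ^ 2 + 1) * B ^ 6) : IsCoprime A D := by
  have hXA := not_X_dvd_of_sq_eq_cube_add hAB hD
  refine isCoprime_of_irreducible_dvd (fun h => hXA (h.1 ▸ dvd_zero X)) fun p hp hpA hpD => ?_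
  have hpB : IsCoprime p B := hAB.of_isCoprime_of_dvd_left hpA
  have hpX : IsCoprime p X := (hp.coprime_iff_not_dvd).2 fun hpX =>
    hXA ((hp.dvd_symm irreducible_X hpX).trans hpA)
  have hdvd : p ^ 2 ∣ X ^ 5 * (X ^ 2 + 1) * B ^ 6 := by
    rw [← sub_eq_of_eq_add' hD]
    exact dvd_sub (pow_dvd_pow_of_dvd hpD 2)
      ((pow_dvd_pow_of_dvd hpA 2).trans (pow_dvd_pow A (Nat.le_succ 2)))
  have hdvd' : p ^ 2 ∣ X ^ 2 + 1 :=
    hpX.pow.dvd_of_dvd_mul_left (hpB.pow.dvd_of_dvd_mul_right hdvd)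
  exact hp.not_isUnit (squarefree_X_sq_add_one p (by rwa [← sq]))

theorem sq_ne_cube_add (hB : B ≠ 0) (hAB : IsCoprime A B) :
    D ^ 2 ≠ A ^ 3 + X ^ 5 * (X ^ 2 + 1) * B ^ 6 := by
  intro hD
  obtain ⟨hdegD, hdegA⟩ := natDegree_of_sq_eq_cube_add hB hD
  have hA : A ≠ 0 := ne_zero_of_natDegree_gt (n := 0) (by lia)
  have hN : maninNumerator A B ≠ 0 := by
    intro hN
    have htop := coeff_maninNumerator A B
    rw [hN, coeff_zero, eq_comm, mul_eq_zero, or_iff_left (by simp [hA, hB])] at htop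
    have : (3 * A.natDegree : F) = (6 * B.natDegree + 7 : ℕ) := by
      push_cast
      linear_combination htop
    have : 3 * A.natDegree = 6 * B.natDegree + 7 := by exact_mod_cast this
    lia
  obtain ⟨M, hM⟩ : D ∣ maninNumerator A B :=
    (isCoprime_of_sq_eq_cube_add hAB hD).symm.pow_right.dvd_of_dvd_mul_left
      (dvd_sq_mul_maninNumerator hD)
  obtain ⟨hD0, hM0⟩ := mul_ne_zero_iff.1 (hM ▸ hN)
  have hdegM : M.natDegree = 0 := by
    have := natDegree_maninNumerator_le A B
    rw [hM, natDegree_mul hD0 hM0] at this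
    lia
  rw [eq_C_of_natDegree_eq_zero hdegM, mul_comm] at hM
  exact maninNumerator_ne_C_mul hD hN hM

end PolynomialEquation

theorem sq_ne_cube_add_X_add_inv_X {F : Type*} [Field F] [CharZero F] (x y : RatFunc F) :
    y ^ 2 ≠ x ^ 3 + RatFunc.X + RatFunc.X⁻¹ := by
  intro h
  have hX : (RatFunc.X : RatFunc F) ≠ 0 := RatFunc.X_ne_zero
  obtain ⟨B, hB, -, hAB, hD⟩ := exists_num_sq_eq_num_cube_add
    (x := RatFunc.X ^ 2 * x) (y := RatFunc.X ^ 3 * y) (f := X ^ 5 * (X ^ 2 + 1)) (by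
      simp only [map_mul, map_pow, map_add, map_one, RatFunc.algebraMap_X, mul_pow, h]
      field_simp
      ring)
  exact sq_ne_cube_add hB hAB hD

section Mordell

open WeierstrassCurve.Affine

/-- The Mordell curve `y² = x³ + B`. -/
abbrev mordell {L : Type*} [Field L] (B : L) : WeierstrassCurve.Affine L :=
  (⟨0, 0, 0, 0, B⟩ : WeierstrassCurve L)

variable {L L' : Type*} [Field L] [Field L'] {B : L} {B' : L'}

theorem mordell_equation_iff {x y : L} : (mordell B).Equation x y ↔ y ^ 2 = x ^ 3 + B := by
  simp [equation_iff]

theorem mordell_nonsingular_iff {x y : L} :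
    (mordell B).Nonsingular x y ↔ y ^ 2 = x ^ 3 + B ∧ (3 * x ^ 2 ≠ 0 ∨ 2 * y ≠ 0) := by
  rw [nonsingular_iff, mordell_equation_iff]
  simp [eq_neg_iff_add_eq_zero, ← two_mul, eq_comm (a := (0 : L))]

theorem mordell_nonsingular_iff_of_ne_zero [CharZero L] (hB : B ≠ 0) {x y : L} :
    (mordell B).Nonsingular x y ↔ y ^ 2 = x ^ 3 + B := by
  rw [mordell_nonsingular_iff, and_iff_left_iff_imp]
  intro h
  by_contra! h0
  simp_all

theorem mordell_nonsingular_twist (f : L →+* L') {u : L'} (hu : u ≠ 0) (hB : u ^ 6 * f B = B')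
    {x y : L} (h : (mordell B).Nonsingular x y) :
    (mordell B').Nonsingular (u ^ 2 * f x) (u ^ 3 * f y) := by
  rw [mordell_nonsingular_iff] at h ⊢
  obtain ⟨h, h'⟩ := h
  constructor
  · rw [← hB, mul_pow, ← map_pow f y, h, map_add, map_pow]
    ring
  · simpa [hu, ← map_ofNat f, ← map_mul, ← map_pow, mul_left_comm _ (u ^ _)] using h'

variable [DecidableEq L] [DecidableEq L']

theorem mordell_slope_twist (f : L →+* L') {u : L'} (hu : u ≠ 0) (x₁ x₂ y₁ y₂ : L) :
    (mordell B').slope (u ^ 2 * f x₁) (u ^ 2 * f x₂) (u ^ 3 * f y₁) (u ^ 3 * f y₂) =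
      u * f ((mordell B).slope x₁ x₂ y₁ y₂) := by
  have hu2 : u ^ 2 ≠ 0 := pow_ne_zero 2 hu
  have hu3 : u ^ 3 ≠ 0 := pow_ne_zero 3 hu
  simp only [WeierstrassCurve.Affine.slope, negY, mul_right_inj' hu2, f.injective.eq_iff, zero_mul,
    sub_zero, ← mul_neg, mul_right_inj' hu3, ← map_neg f]
  split_ifs
  · simp
  · rw [map_div₀]
    simp only [map_sub, map_add, map_mul, map_pow, map_neg, map_ofNat, map_zero]
    rw [← mul_sub, ← mul_div_assoc, ← mul_div_mul_left _ (f y₁ - -f y₁) hu3]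
    ring
  · rw [map_div₀, map_sub, map_sub, ← mul_sub, ← mul_sub, pow_succ, mul_assoc,
      mul_div_mul_left _ _ hu2, mul_div_assoc]

/-- The homomorphism `(x, y) ↦ (u² f(x), u³ f(y))` from `y² = x³ + B` to `y² = x³ + u⁶ f(B)`.
Galois conjugation, multiplication by a cube root of unity, and passage to a twist or to an
extension field are all of this shape. -/
noncomputable def twistMap (f : L →+* L') (u : L') (hu : u ≠ 0) (hB : u ^ 6 * f B = B') :
    (mordell B).Point →+ (mordell B').Point :=
  AddMonoidHom.mk'
    (fun
      | 0 => 0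
      | .some x y h => .some (u ^ 2 * f x) (u ^ 3 * f y) (mordell_nonsingular_twist f hu hB h))
    (by
      rintro (_ | ⟨x₁, y₁, h₁⟩) (_ | ⟨x₂, y₂, h₂⟩)
      · rfl
      · rfl
      · rfl
      by_cases hxy : x₁ = x₂ ∧ y₁ = (mordell B).negY x₂ y₂
      · have hxy' : u ^ 2 * f x₁ = u ^ 2 * f x₂ ∧
            u ^ 3 * f y₁ = (mordell B').negY (u ^ 2 * f x₂) (u ^ 3 * f y₂) := by
          simp [hxy.1, hxy.2, negY]
        rw [Point.add_of_Y_eq hxy.1 hxy.2]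
        exact (Point.add_of_Y_eq hxy'.1 hxy'.2).symm
      · have hxy' : ¬ (u ^ 2 * f x₁ = u ^ 2 * f x₂ ∧
            u ^ 3 * f y₁ = (mordell B').negY (u ^ 2 * f x₂) (u ^ 3 * f y₂)) := by
          simpa [negY, hu, ← mul_neg, ← map_neg f, f.injective.eq_iff, -map_neg] using hxy
        rw [Point.add_some hxy]
        refine Eq.trans ?_ (Point.add_some hxy').symm
        rw [Point.some.injEq, mordell_slope_twist (B := B) f hu]
        constructor <;>
          simp only [addX, addY, negAddY, negY, map_sub, map_add, map_mul, map_pow, map_zero,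
            map_neg] <;>
          ring)

@[simp]
theorem twistMap_some (f : L →+* L') {u : L'} (hu : u ≠ 0) (hB : u ^ 6 * f B = B') {x y : L}
    (h : (mordell B).Nonsingular x y) :
    twistMap f u hu hB (.some x y h) =
      .some (u ^ 2 * f x) (u ^ 3 * f y) (mordell_nonsingular_twist f hu hB h) :=
  rfl

omit [DecidableEq L'] in
theorem mordell_add_some_eq_some {x₁ y₁ x₂ y₂ x₃ y₃ : L} {h₁ : (mordell B).Nonsingular x₁ y₁}
    {h₂ : (mordell B).Nonsingular x₂ y₂} {h₃ : (mordell B).Nonsingular x₃ y₃}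
    (h : Point.some x₁ y₁ h₁ + Point.some x₂ y₂ h₂ = Point.some x₃ y₃ h₃) :
    ∃ l m, y₁ = l * x₁ + m ∧ y₂ = l * x₂ + m ∧ -y₃ = l * x₃ + m ∧
      x₁ + x₂ + x₃ = l ^ 2 ∧ x₁ * x₂ + x₁ * x₃ + x₂ * x₃ = -2 * l * m ∧
      x₁ * x₂ * x₃ = m ^ 2 - B := by
  have hxy : ¬ (x₁ = x₂ ∧ y₁ = (mordell B).negY x₂ y₂) := fun hxy =>
    Point.some_ne_zero h₃ (h.symm.trans (Point.add_of_Y_eq hxy.1 hxy.2))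
  rw [Point.add_some hxy, Point.some.injEq] at h
  obtain ⟨rfl, rfl⟩ := h
  set l := (mordell B).slope x₁ x₂ y₁ y₂ with hl
  refine ⟨l, y₁ - l * x₁, by ring, ?_, ?_, ?_, ?_⟩
  · by_cases hx : x₁ = x₂
    · rw [Y_eq_of_Y_ne h₁.1 h₂.1 hx fun hy => hxy ⟨hx, hy⟩, hx]
      ring
    · rw [hl, slope_of_X_ne hx]
      field_simp [sub_ne_zero.2 hx]
      ring
  · simp only [addY, negAddY, negY]
    ring
  · simp only [addX]
    ring
  · have hroots := addPolynomial_slope h₁.1 h₂.1 hxy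
    rw [addPolynomial_eq, neg_inj, Cubic.prod_X_sub_C_eq, Cubic.toPoly_injective] at hroots
    have hc := congrArg Cubic.c hroots
    have hd := congrArg Cubic.d hroots
    simp only [zero_mul, zero_sub, add_zero, sub_zero] at hc hd
    constructor
    · linear_combination -hc
    · linear_combination hd

end Mordell

section ThreeIsogeny

open WeierstrassCurve.Affine

variable {L : Type*} [Field L] {B ω : L}

theorem pow_three_eq_one_of_sq_add_add_one (hω : ω ^ 2 + ω + 1 = 0) : ω ^ 3 = 1 := by
  linear_combination (ω - 1) * hω

theorem sub_sq_sq_eq_neg_three (hω : ω ^ 2 + ω + 1 = 0) : (ω - ω ^ 2) ^ 2 = -3 := by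
  linear_combination (ω ^ 2 - 3 * ω + 3) * hω

variable [DecidableEq L]

/-- The endomorphism `(x, y) ↦ (ζ x, y)` of `y² = x³ + B` attached to a cube root of unity `ζ`. -/
noncomputable def mulCubeRoot (B : L) {ζ : L} (hζ : ζ ^ 3 = 1) :
    (mordell B).Point →+ (mordell B).Point :=
  twistMap (RingHom.id L) (ζ ^ 2) (pow_ne_zero 2 (ne_zero_pow three_ne_zero (hζ ▸ one_ne_zero)))
    (by linear_combination B * (ζ ^ 9 + ζ ^ 6 + ζ ^ 3 + 1) * hζ)

theorem mulCubeRoot_some {ζ : L} (hζ : ζ ^ 3 = 1) {x y : L} (h : (mordell B).Nonsingular x y) :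
    ∃ h', mulCubeRoot B hζ (.some x y h) = .some (ζ * x) y h' := by
  have hx : (ζ ^ 2) ^ 2 * x = ζ * x := by linear_combination ζ * x * hζ
  have hy : (ζ ^ 2) ^ 3 * y = y := by linear_combination (ζ ^ 3 + 1) * y * hζ
  have hmap : mulCubeRoot B hζ (.some x y h) =
      .some ((ζ ^ 2) ^ 2 * x) ((ζ ^ 2) ^ 3 * y) _ := twistMap_some ..
  simp only [hx, hy] at hmap
  exact ⟨_, hmap⟩

/-- The endomorphism `[ω] - [ω²] = [√-3]` of `y² = x³ + B`, where `ω` is a primitive cube root of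
unity. -/
noncomputable def sqrtNegThree (B : L) (hω : ω ^ 2 + ω + 1 = 0) :
    (mordell B).Point →+ (mordell B).Point :=
  mulCubeRoot B (pow_three_eq_one_of_sq_add_add_one hω) -
    mulCubeRoot B (ζ := ω ^ 2) (by linear_combination (ω ^ 4 - ω ^ 3 + ω - 1) * hω)

theorem sqrtNegThree_some [CharZero L] (hω : ω ^ 2 + ω + 1 = 0) {X Y l : L}
    (h : (mordell B).Nonsingular X Y) (hX : X ≠ 0) (hl : (ω - ω ^ 2) * X * l = 2 * Y) :
    ∃ h', sqrtNegThree B hω (.some X Y h) =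
      .some (l ^ 2 + X) (-(l ^ 3 + 3 / 2 * l * X)) h' := by
  have hω1 : ω - ω ^ 2 ≠ 0 := by
    intro h0
    simpa [h0] using sub_sq_sq_eq_neg_three hω
  have hx : ω * X ≠ ω ^ 2 * X := by
    rw [← sub_ne_zero, ← sub_mul]
    exact mul_ne_zero hω1 hX
  obtain ⟨h₁, e₁⟩ := mulCubeRoot_some (pow_three_eq_one_of_sq_add_add_one hω) h
  obtain ⟨h₂, e₂⟩ := mulCubeRoot_some (ζ := ω ^ 2)
    (by linear_combination (ω ^ 4 - ω ^ 3 + ω - 1) * hω) h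
  have hslope : (mordell B).slope (ω * X) (ω ^ 2 * X) Y ((mordell B).negY (ω ^ 2 * X) Y) = l := by
    rw [slope_of_X_ne hx, div_eq_iff (sub_ne_zero.2 hx)]
    simp only [negY]
    linear_combination -hl
  have haddX : (mordell B).addX (ω * X) (ω ^ 2 * X) l = l ^ 2 + X := by
    simp only [addX]
    linear_combination -X * hω
  have haddY : (mordell B).addY (ω * X) (ω ^ 2 * X) Y l = -(l ^ 3 + 3 / 2 * l * X) := by
    simp only [addX, addY, negAddY, negY]
    linear_combination (3 / 2) * X * l * hω + (1 / 2) * hl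
  have hsum := Point.add_of_X_ne (h₁ := h₁) (h₂ := (nonsingular_neg _ _).2 h₂) hx
  simp only [hslope, haddX, haddY] at hsum
  refine ⟨_, Eq.trans ?_ hsum⟩
  rw [sqrtNegThree, AddMonoidHom.sub_apply, e₁, e₂, sub_eq_add_neg, Point.neg_some]

end ThreeIsogeny

section DescentMap

open WeierstrassCurve.Affine

variable {L M : Type*} [Field L] [Field M] (φ : L →+* M) {B : L} {w : M}

section QuadraticExtension

theorem map_sub_ne_zero_of_sq_eq (hw : w ^ 2 = φ B) (hB : ¬ IsSquare B) (y : L) : φ y - w ≠ 0 := by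
  intro h
  refine hB ⟨y, φ.injective ?_⟩
  rw [← hw, map_mul, sub_eq_zero.1 h, sq]

theorem map_add_map_mul_eq_zero_iff (hw : w ^ 2 = φ B) (hB : ¬ IsSquare B) {a b : L} :
    φ a + φ b * w = 0 ↔ a = 0 ∧ b = 0 := by
  refine ⟨fun h => ?_, by rintro ⟨rfl, rfl⟩; simp⟩
  have hb : b = 0 := by
    by_contra hb
    refine map_sub_ne_zero_of_sq_eq φ hw hB (-a / b) ?_
    have : φ b ≠ 0 := (map_ne_zero φ).2 hb
    rw [map_div₀, map_neg]
    field_simp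
    linear_combination -h
  simpa [hb] using h

theorem mordell_x_ne_zero (hB : ¬ IsSquare B) {x y : L} (h : (mordell B).Nonsingular x y) :
    x ≠ 0 := by
  rintro rfl
  exact hB ⟨y, by linear_combination -(mordell_nonsingular_iff.1 h).1⟩

end QuadraticExtension

/-- The group `Mˣ / (Mˣ)³` in which the descent map takes its values. -/
abbrev UnitsModCubes (M : Type*) [Field M] : Type _ :=
  Mˣ ⧸ (powMonoidHom 3 : Mˣ →* Mˣ).range

/-- The unit `φ(y) - w`, where `w` is a square root of the non-square `B` in an extension
`φ : L → M`. It represents the value of the descent map at a point with ordinate `y`. -/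
noncomputable def descentUnit (hw : w ^ 2 = φ B) (hB : ¬ IsSquare B) (y : L) : Mˣ :=
  Units.mk0 (φ y - w) (map_sub_ne_zero_of_sq_eq φ hw hB y)

theorem descentUnit_mul_neg (hw : w ^ 2 = φ B) (hB : ¬ IsSquare B) {x y : L}
    (h : (mordell B).Nonsingular x y) :
    descentUnit φ hw hB y * descentUnit φ hw hB (-y) =
      Units.mk0 (-φ x) (neg_ne_zero.2 ((map_ne_zero φ).2 (mordell_x_ne_zero hB h))) ^ 3 := by
  ext
  have hxy := congrArg φ (mordell_nonsingular_iff.1 h).1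
  simp only [map_pow, map_add] at hxy
  simp only [descentUnit, Units.val_mul, Units.val_pow_eq_pow_val, Units.val_mk0, map_neg]
  linear_combination hw - hxy

variable [DecidableEq L]

theorem descentUnit_mul_mul_neg (hw : w ^ 2 = φ B) (hB : ¬ IsSquare B) {x₁ y₁ x₂ y₂ x₃ y₃ : L}
    {h₁ : (mordell B).Nonsingular x₁ y₁} {h₂ : (mordell B).Nonsingular x₂ y₂}
    {h₃ : (mordell B).Nonsingular x₃ y₃}
    (h : Point.some x₁ y₁ h₁ + Point.some x₂ y₂ h₂ = Point.some x₃ y₃ h₃) :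
    ∃ u : Mˣ, descentUnit φ hw hB y₁ * descentUnit φ hw hB y₂ * descentUnit φ hw hB (-y₃) =
      u ^ 3 := by
  obtain ⟨l, m, e₁, e₂, e₃, s₁, s₂, s₃⟩ := mordell_add_some_eq_some h
  refine ⟨descentUnit φ hw hB m, ?_⟩
  rw [e₁, e₂, e₃]
  ext
  replace s₁ := congrArg φ s₁
  replace s₂ := congrArg φ s₂
  replace s₃ := congrArg φ s₃
  simp only [map_add, map_mul, map_neg, map_sub, map_pow, map_ofNat] at s₁ s₂ s₃
  simp only [descentUnit, Units.val_mul, Units.val_pow_eq_pow_val, Units.val_mk0, map_add, map_mul]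
  linear_combination φ l ^ 3 * s₃ + φ l ^ 2 * (φ m - w) * s₂ + φ l * (φ m - w) ^ 2 * s₁ +
    φ l ^ 3 * hw

theorem descentUnit_mul (hw : w ^ 2 = φ B) (hB : ¬ IsSquare B) {x₁ y₁ x₂ y₂ x₃ y₃ : L}
    {h₁ : (mordell B).Nonsingular x₁ y₁} {h₂ : (mordell B).Nonsingular x₂ y₂}
    {h₃ : (mordell B).Nonsingular x₃ y₃}
    (h : Point.some x₁ y₁ h₁ + Point.some x₂ y₂ h₂ = Point.some x₃ y₃ h₃) :
    (descentUnit φ hw hB y₁ * descentUnit φ hw hB y₂ : UnitsModCubes M) =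
      descentUnit φ hw hB y₃ := by
  obtain ⟨u, hu⟩ := descentUnit_mul_mul_neg φ hw hB h
  rw [← QuotientGroup.mk_mul, QuotientGroup.eq_iff_div_mem,
    ← mul_div_mul_right_eq_div _ _ (descentUnit φ hw hB (-y₃)), hu, descentUnit_mul_neg φ hw hB h₃,
    ← div_pow]
  exact ⟨_, rfl⟩

/-- The value of the descent map `(x, y) ↦ y - √B` of the 3-isogeny `[√-3]` on `y² = x³ + B`,
taken in the units modulo cubes of an extension `φ : L → M` in which `B` has a square root `w`. -/
noncomputable def descentClass (hw : w ^ 2 = φ B) (hB : ¬ IsSquare B) :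
    (mordell B).Point → UnitsModCubes M
  | 0 => 1
  | .some _ y _ => descentUnit φ hw hB y

omit [DecidableEq L] in
theorem descentClass_zero (hw : w ^ 2 = φ B) (hB : ¬ IsSquare B) :
    descentClass φ hw hB 0 = 1 :=
  rfl

theorem descentClass_add (hw : w ^ 2 = φ B) (hB : ¬ IsSquare B) (P Q : (mordell B).Point) :
    descentClass φ hw hB (P + Q) = descentClass φ hw hB P * descentClass φ hw hB Q := by
  rcases P with _ | ⟨x₁, y₁, h₁⟩
  · rw [← Point.zero_def, zero_add, descentClass_zero]
    exact (one_mul (descentClass φ hw hB Q)).symm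
  rcases Q with _ | ⟨x₂, y₂, h₂⟩
  · rw [← Point.zero_def, add_zero, descentClass_zero]
    exact (mul_one (descentClass φ hw hB (.some x₁ y₁ h₁))).symm
  rcases hP : Point.some x₁ y₁ h₁ + Point.some x₂ y₂ h₂ with _ | ⟨x₃, y₃, h₃⟩
  · rw [← Point.zero_def, add_eq_zero_iff_neg_eq, Point.neg_some, Point.some.injEq] at hP
    obtain ⟨rfl, rfl⟩ := hP
    refine ((QuotientGroup.eq_one_iff _).2 ?_).symm.trans (QuotientGroup.mk_mul _ _ _)
    simp only [negY, zero_mul, sub_zero, descentUnit_mul_neg φ hw hB h₁]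
    exact ⟨_, rfl⟩
  · exact (descentUnit_mul φ hw hB hP).symm

/-- The descent map of the 3-isogeny `[√-3]` as a homomorphism; its kernel is the image of
`[√-3]`. -/
noncomputable def descentMap (hw : w ^ 2 = φ B) (hB : ¬ IsSquare B) :
    (mordell B).Point →+ Additive (UnitsModCubes M) :=
  AddMonoidHom.mk' (fun P => Additive.ofMul (descentClass φ hw hB P))
    fun P Q => congrArg Additive.ofMul (descentClass_add φ hw hB P Q)

end DescentMap

section Kernel

open WeierstrassCurve.Affine

variable {L M : Type*} [Field L] [Field M] (φ : L →+* M) {B ω : L} {w : M}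

theorem exists_of_map_sub_eq_cube (hw : w ^ 2 = φ B) (hB : ¬ IsSquare B) {y m n : L}
    (h : φ y - w = (φ m + φ n * w) ^ 3) :
    y = m ^ 3 + 3 * m * n ^ 2 * B ∧ 3 * m ^ 2 * n + n ^ 3 * B = -1 := by
  have hzero := (map_add_map_mul_eq_zero_iff φ hw hB
    (a := y - (m ^ 3 + 3 * m * n ^ 2 * B)) (b := -1 - (3 * m ^ 2 * n + n ^ 3 * B))).1 (by
      simp only [map_sub, map_add, map_mul, map_pow, map_ofNat, map_neg, map_one]
      linear_combination h + (3 * φ m * φ n ^ 2 + φ n ^ 3 * w) * hw)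
  exact ⟨sub_eq_zero.1 hzero.1, (sub_eq_zero.1 hzero.2).symm⟩

theorem eq_or_eq_mul_or_eq_mul_of_pow_three_eq (hω : ω ^ 2 + ω + 1 = 0) {a b : L}
    (h : a ^ 3 = b ^ 3) : a = b ∨ a = ω * b ∨ a = ω ^ 2 * b := by
  have hfac : (a - b) * ((a - ω * b) * (a - ω ^ 2 * b)) = 0 := by
    linear_combination h + (-b * a * (a - b) + b ^ 2 * (a - b) * (ω - 1)) * hω
  simpa only [mul_eq_zero, sub_eq_zero] using hfac

theorem exists_of_map_sub_eq_cube_of_equation (hω : ω ^ 2 + ω + 1 = 0) (hw : w ^ 2 = φ B)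
    (hB : ¬ IsSquare B) {x y m n : L} (hxy : y ^ 2 = x ^ 3 + B)
    (h : φ y - w = (φ m + φ n * w) ^ 3) :
    ∃ m n, y = m ^ 3 + 3 * m * n ^ 2 * B ∧ 3 * m ^ 2 * n + n ^ 3 * B = -1 ∧
      x = m ^ 2 - n ^ 2 * B := by
  have hω3 := pow_three_eq_one_of_sq_add_add_one hω
  obtain ⟨hy, h1⟩ := exists_of_map_sub_eq_cube φ hw hB h
  have hx3 : x ^ 3 = (m ^ 2 - n ^ 2 * B) ^ 3 := by
    rw [hy] at hxy
    linear_combination -hxy + B * (3 * m ^ 2 * n + n ^ 3 * B - 1) * h1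
  rcases eq_or_eq_mul_or_eq_mul_of_pow_three_eq hω hx3 with hx | hx | hx
  · exact ⟨m, n, hy, h1, hx⟩
  · refine ⟨ω ^ 2 * m, ω ^ 2 * n, ?_, ?_, ?_⟩
    · linear_combination hy - (m ^ 3 + 3 * m * n ^ 2 * B) * (ω ^ 3 + 1) * hω3
    · linear_combination h1 + (3 * m ^ 2 * n + n ^ 3 * B) * (ω ^ 3 + 1) * hω3
    · linear_combination hx - ω * (m ^ 2 - n ^ 2 * B) * hω3
  · refine ⟨ω * m, ω * n, ?_, ?_, ?_⟩
    · linear_combination hy - (m ^ 3 + 3 * m * n ^ 2 * B) * hω3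
    · linear_combination h1 + (3 * m ^ 2 * n + n ^ 3 * B) * hω3
    · linear_combination hx

variable [DecidableEq L] [CharZero L]

theorem exists_sqrtNegThree_eq_some (hω : ω ^ 2 + ω + 1 = 0) {m n x y : L}
    (h : (mordell B).Nonsingular x y) (hy : y = m ^ 3 + 3 * m * n ^ 2 * B)
    (h1 : 3 * m ^ 2 * n + n ^ 3 * B = -1) (hx : x = m ^ 2 - n ^ 2 * B) :
    ∃ Q, sqrtNegThree B hω Q = .some x y h := by
  have hn : n ≠ 0 := by
    rintro rfl
    simp at h1
  have hQ : (mordell B).Nonsingular (1 / n) ((ω - ω ^ 2) * m / n) := by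
    refine mordell_nonsingular_iff.2 ⟨?_, .inl (by simp [hn])⟩
    field_simp
    linear_combination m ^ 2 * n * sub_sq_sq_eq_neg_three hω - h1
  obtain ⟨h', hT⟩ := sqrtNegThree_some hω hQ (one_div_ne_zero hn) (l := 2 * m) (by field_simp)
  refine ⟨_, hT.trans ?_⟩
  rw [Point.some.injEq]
  constructor
  · rw [hx]
    field_simp
    linear_combination h1
  · rw [hy]
    field_simp
    linear_combination -3 * m * h1

theorem exists_sqrtNegThree_eq_of_descentMap_eq_zero (hω : ω ^ 2 + ω + 1 = 0)
    (hw : w ^ 2 = φ B) (hB : ¬ IsSquare B) (hdec : ∀ b, ∃ m n, b = φ m + φ n * w)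
    {P : (mordell B).Point} (hP : descentMap φ hw hB P = 0) : ∃ Q, sqrtNegThree B hω Q = P := by
  rcases P with _ | ⟨x, y, h⟩
  · exact ⟨0, map_zero _⟩
  obtain ⟨β, hβ⟩ := (QuotientGroup.eq_one_iff _).1 (ofMul_eq_zero.1 hP)
  obtain ⟨m, n, hmn⟩ := hdec β
  have hcube : φ y - w = (φ m + φ n * w) ^ 3 := by
    rw [← hmn]
    exact (congrArg Units.val hβ).symm
  obtain ⟨m, n, hy, h1, hx⟩ :=
    exists_of_map_sub_eq_cube_of_equation φ hω hw hB (mordell_nonsingular_iff.1 h).1 hcube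
  exact exists_sqrtNegThree_eq_some hω h hy h1 hx

end Kernel

section Substitution

variable {F : Type*} [Field F]

theorem transcendental_of_intDegree_ne_zero {g : RatFunc F} (hg : g.intDegree ≠ 0) :
    Transcendental F g :=
  g.transcendental_of_ne_C fun ⟨c, hc⟩ => hg (hc ▸ RatFunc.intDegree_C c)

/-- The substitution `f ↦ f(g)` of a nonconstant rational function `g` for the variable. -/
noncomputable def substX (g : RatFunc F) (hg : Transcendental F g) : RatFunc F →+* RatFunc F :=
  RatFunc.liftRingHom (aeval g).toRingHom
    (nonZeroDivisors_le_comap_nonZeroDivisors_of_injective _ (transcendental_iff_injective.1 hg))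

@[simp]
theorem substX_algebraMap {g : RatFunc F} (hg : Transcendental F g) (p : F[X]) :
    substX g hg (algebraMap _ _ p) = aeval g p := by
  simp [substX]

@[simp]
theorem substX_C {g : RatFunc F} (hg : Transcendental F g) (a : F) :
    substX g hg (RatFunc.C a) = RatFunc.C a := by
  simpa [RatFunc.algebraMap_eq_C] using substX_algebraMap hg (C a)

@[simp]
theorem substX_X {g : RatFunc F} (hg : Transcendental F g) : substX g hg RatFunc.X = g := by
  simpa using substX_algebraMap hg X

theorem ringHom_ext_of_C_of_X {R : Type*} [Semiring R] {φ ψ : RatFunc F →+* R}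
    (hC : ∀ a, φ (RatFunc.C a) = ψ (RatFunc.C a)) (hX : φ RatFunc.X = ψ RatFunc.X) : φ = ψ :=
  IsLocalization.ringHom_ext (nonZeroDivisors F[X])
    (ringHom_ext (by simpa using hC) (by simpa using hX))

theorem mapCoeff_substX {E : Type*} [Field E] (σ : F →+* E) {g : RatFunc F}
    (hg : Transcendental F g) (hg' : Transcendental E (mapCoeff σ g)) (f : RatFunc F) :
    mapCoeff σ (substX g hg f) = substX (mapCoeff σ g) hg' (mapCoeff σ f) :=
  RingHom.congr_fun (f := (mapCoeff σ).comp (substX g hg))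
    (g := (substX (mapCoeff σ g) hg').comp (mapCoeff σ))
    (ringHom_ext_of_C_of_X (by simp) (by simp)) f

theorem exists_eq_algebraMap_add_algebraMap_mul {L M : Type*} [Field L] [Field M] [Algebra L M]
    {a : M} {p q : L} (ha : a ^ 2 = algebraMap L M p * a + algebraMap L M q)
    (htop : IntermediateField.adjoin L {a} = ⊤) (b : M) :
    ∃ m n, b = algebraMap L M m + algebraMap L M n * a := by
  let f : L[X] := X ^ 2 - (C p * X + C q)
  have hf : f.Monic := monic_X_pow_sub (degree_linear_le.trans_lt (by norm_num))
  have hfa : aeval a f = 0 := by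
    simp [f, ha]
  have hb : b ∈ Algebra.adjoin L {a} := by
    rw [← IntermediateField.adjoin_simple_toSubalgebra_of_isAlgebraic ⟨f, hf.ne_zero, hfa⟩, htop]
    trivial
  rw [Algebra.adjoin_singleton_eq_range_aeval] at hb
  obtain ⟨P, rfl⟩ := hb
  have hdeg : (P %ₘ f).natDegree ≤ 1 := by
    have hf2 : f.natDegree = 2 := natDegree_eq_of_degree_eq_some
      ((degree_sub_eq_left_of_degree_lt (by
        rw [degree_X_pow]; exact degree_linear_le.trans_lt (by norm_num))).trans (degree_X_pow 2))
    have := natDegree_modByMonic_lt P hf (by rintro h; simp [h] at hf2)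
    omega
  obtain ⟨n, m, hP⟩ := exists_eq_X_add_C_of_natDegree_le_one hdeg
  refine ⟨m, n, ?_⟩
  calc aeval a P = aeval a (P %ₘ f) := (aeval_modByMonic_eq_self_of_root hfa).symm
    _ = _ := by simp [hP, add_comm]

theorem exists_eq_map_add_map_mul_X {L : Type*} [Field L] (φ : L →+* RatFunc F)
    (hC : ∀ a, RatFunc.C a ∈ φ.range) {p q : L}
    (h : (RatFunc.X : RatFunc F) ^ 2 = φ p * RatFunc.X + φ q) (f : RatFunc F) :
    ∃ m n, f = φ m + φ n * RatFunc.X := by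
  let := φ.toAlgebra
  refine exists_eq_algebraMap_add_algebraMap_mul h (eq_top_iff.2 fun g _ => ?_) f
  have hpoly (P : F[X]) :
      algebraMap F[X] (RatFunc F) P ∈ IntermediateField.adjoin L {(RatFunc.X : RatFunc F)} := by
    induction P using Polynomial.induction_on' with
    | add P Q hP hQ => exact map_add (algebraMap F[X] (RatFunc F)) P Q ▸ add_mem hP hQ
    | monomial n a =>
      obtain ⟨b, hb⟩ := hC a
      rw [← C_mul_X_pow_eq_monomial, map_mul, map_pow, RatFunc.algebraMap_C, RatFunc.algebraMap_X,
        ← hb]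
      exact mul_mem (algebraMap_mem _ b)
        (pow_mem (IntermediateField.mem_adjoin_simple_self _ _) n)
  exact g.num_div_denom ▸ div_mem (hpoly g.num) (hpoly g.denom)

end Substitution

section EvenReduction

open WeierstrassCurve.Affine

variable {F : Type*} [Field F]

theorem transcendental_neg_X : Transcendental F (-RatFunc.X : RatFunc F) :=
  transcendental_of_intDegree_ne_zero (by simp)

theorem transcendental_X_sq : Transcendental F (RatFunc.X ^ 2 : RatFunc F) :=
  transcendental_of_intDegree_ne_zero (by simp [sq, RatFunc.intDegree_mul, RatFunc.X_ne_zero])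

theorem substX_neg_X_substX_neg_X (f : RatFunc F) :
    substX _ transcendental_neg_X (substX _ transcendental_neg_X f) = f :=
  RingHom.congr_fun (f := (substX _ transcendental_neg_X).comp (substX _ transcendental_neg_X))
    (g := RingHom.id _) (ringHom_ext_of_C_of_X (by simp) (by simp)) f

theorem substX_neg_X_substX_X_sq (f : RatFunc F) :
    substX _ transcendental_neg_X (substX _ transcendental_X_sq f) =
      substX _ transcendental_X_sq f :=
  RingHom.congr_fun (f := (substX _ transcendental_neg_X).comp (substX _ transcendental_X_sq))
    (g := substX _ transcendental_X_sq) (ringHom_ext_of_C_of_X (by simp) (by simp)) f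

theorem exists_eq_substX_X_sq_add_mul_X (f : RatFunc F) :
    ∃ m n, f = substX _ transcendental_X_sq m + substX _ transcendental_X_sq n * RatFunc.X :=
  exists_eq_map_add_map_mul_X _ (fun a => ⟨_, substX_C _ a⟩) (p := 0) (q := RatFunc.X)
    (by simp) f

theorem exists_eq_substX_X_sq [CharZero F] {f : RatFunc F}
    (hf : substX _ transcendental_neg_X f = f) : ∃ m, f = substX _ transcendental_X_sq m := by
  obtain ⟨m, n, rfl⟩ := exists_eq_substX_X_sq_add_mul_X f
  simp only [map_add, map_mul, substX_neg_X_substX_X_sq, substX_X] at hf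
  exact ⟨m, by linear_combination (-1 / 2) * hf⟩

theorem exists_eq_substX_X_sq_mul_X [CharZero F] {f : RatFunc F}
    (hf : substX _ transcendental_neg_X f = -f) :
    ∃ n, f = substX _ transcendental_X_sq n * RatFunc.X := by
  obtain ⟨m, n, rfl⟩ := exists_eq_substX_X_sq_add_mul_X f
  simp only [map_add, map_mul, substX_neg_X_substX_X_sq, substX_X] at hf
  exact ⟨n, by linear_combination (1 / 2) * hf⟩

theorem not_even_of_sq_eq [CharZero F] {x y : RatFunc F}
    (h : y ^ 2 = x ^ 3 + (RatFunc.X ^ 2 + (RatFunc.X ^ 2)⁻¹)) :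
    ¬ (substX _ transcendental_neg_X x = x ∧ substX _ transcendental_neg_X y = y) := by
  rintro ⟨hx, hy⟩
  obtain ⟨x, rfl⟩ := exists_eq_substX_X_sq hx
  obtain ⟨y, rfl⟩ := exists_eq_substX_X_sq hy
  refine sq_ne_cube_add_X_add_inv_X x y ((substX _ transcendental_X_sq).injective ?_)
  simpa [add_assoc] using h

theorem substX_neg_X_eq_of_sq_eq [CharZero F] {x y : RatFunc F}
    (h : y ^ 2 = x ^ 3 + (RatFunc.X ^ 2 + (RatFunc.X ^ 2)⁻¹)) :
    substX _ transcendental_neg_X x = x ∧ substX _ transcendental_neg_X y = -y := by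
  classical
  set B : RatFunc F := RatFunc.X ^ 2 + (RatFunc.X ^ 2)⁻¹ with hB
  have hB0 : B ≠ 0 := by
    intro h0
    have hX : (RatFunc.X : RatFunc F) ≠ 0 := RatFunc.X_ne_zero
    rw [hB] at h0
    field_simp at h0
    rw [mul_zero] at h0
    have := congrArg RatFunc.intDegree (eq_neg_of_add_eq_zero_left h0)
    norm_num [RatFunc.intDegree_mul, hX, pow_succ] at this
  let S : (mordell B).Point →+ (mordell B).Point :=
    twistMap (substX _ transcendental_neg_X) 1 one_ne_zero (by simp [hB])
  have hSS (P) : S (S P) = P := by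
    rcases P with _ | ⟨x, y, h⟩
    · rfl
    · simp [S, twistMap_some, substX_neg_X_substX_neg_X]
  let P : (mordell B).Point := .some x y ((mordell_nonsingular_iff_of_ne_zero hB0).2 h)
  have hfix : S (P + S P) = P + S P := by rw [map_add, hSS, add_comm]
  rcases hsum : P + S P with _ | ⟨x', y', h'⟩
  · rw [← Point.zero_def, add_comm, add_eq_zero_iff_eq_neg] at hsum
    simpa [S, P, twistMap_some, Point.neg_some, negY] using hsum
  · rw [hsum] at hfix
    refine absurd ?_ (not_even_of_sq_eq (mordell_nonsingular_iff.1 h').1)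
    simpa [S, twistMap_some] using hfix

theorem exists_eq_substX_X_sq_div_of_sq_eq [CharZero F] {x y : RatFunc F}
    (h : y ^ 2 = x ^ 3 + (RatFunc.X ^ 2 + (RatFunc.X ^ 2)⁻¹)) :
    ∃ ξ η : RatFunc F, η ^ 2 = ξ ^ 3 + RatFunc.X ^ 2 * (RatFunc.X ^ 2 + 1) ∧
      x = substX _ transcendental_X_sq ξ / RatFunc.X ^ 2 ∧
      y = substX _ transcendental_X_sq η / RatFunc.X ^ 3 := by
  have hX : (RatFunc.X : RatFunc F) ≠ 0 := RatFunc.X_ne_zero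
  obtain ⟨hx, hy⟩ := substX_neg_X_eq_of_sq_eq h
  obtain ⟨ξ, rfl⟩ := exists_eq_substX_X_sq hx
  obtain ⟨η, rfl⟩ := exists_eq_substX_X_sq_mul_X hy
  refine ⟨RatFunc.X * ξ, RatFunc.X ^ 2 * η, (substX _ transcendental_X_sq).injective ?_, ?_, ?_⟩
  · simp only [map_add, map_pow, map_mul, substX_X, map_one]
    field_simp at h
    linear_combination RatFunc.X ^ 4 * h
  · simp only [map_mul, substX_X]
    field_simp
  · simp only [map_mul, map_pow, substX_X]
    field_simp

end EvenReduction

section UnitsModPowers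

open WithZero IsDedekindDomain

variable {R K : Type*} [CommRing R] [IsDedekindDomain R] [Field K] [Algebra R K]
  [IsFractionRing R K] (v : HeightOneSpectrum R)

theorem valuationOfNeZeroMod_mk_of_valuation_eq_exp (n : ℕ) {u : Kˣ} {k : ℤ}
    (hu : v.valuation K (u : K) = exp k) :
    v.valuationOfNeZeroMod n (u : Kˣ ⧸ (powMonoidHom n : Kˣ →* Kˣ).range) =
      Multiplicative.ofAdd (k : ZMod n) := by
  have hk : v.valuationOfNeZero u = Multiplicative.ofAdd k := by
    rw [← WithZero.coe_inj, HeightOneSpectrum.valuationOfNeZero_eq, hu, exp]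
  calc v.valuationOfNeZeroMod n (u : Kˣ ⧸ (powMonoidHom n : Kˣ →* Kˣ).range)
      = Multiplicative.ofAdd ((Multiplicative.toAdd (v.valuationOfNeZero u) : ℤ) : ZMod n) := rfl
    _ = Multiplicative.ofAdd (k : ZMod n) := by rw [hk, toAdd_ofAdd]

theorem exists_valuation_eq_exp {z : K} (hz : z ≠ 0) : ∃ k : ℤ, v.valuation K z = exp k :=
  ⟨_, (exp_log ((Valuation.ne_zero_iff _).2 hz)).symm⟩

end UnitsModPowers

section LocalDescent

open WeierstrassCurve.Affine WithZero IsDedekindDomain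

variable {L M : Type*} [Field L] [Field M] [DecidableEq L] (φ : L →+* M) {B : L} {w : M}
  {R : Type*} [CommRing R] [IsDedekindDomain R] [Algebra R M] [IsFractionRing R M]

/-- The valuation modulo `3` of the descent map at a place `v` of the extension `φ : L → M`. -/
noncomputable def localDescent (hw : w ^ 2 = φ B) (hB : ¬ IsSquare B) (v : HeightOneSpectrum R) :
    (mordell B).Point →+ ZMod 3 :=
  (MonoidHom.toAdditiveLeft (v.valuationOfNeZeroMod (K := M) 3)).comp (descentMap φ hw hB)

variable (hw : w ^ 2 = φ B) (hB : ¬ IsSquare B)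

theorem localDescent_some_of_valuation_eq_exp {v : HeightOneSpectrum R} {x y : L}
    (h : (mordell B).Nonsingular x y) {k : ℤ} (hk : v.valuation M (φ y - w) = exp k) :
    localDescent φ hw hB v (.some x y h) = k :=
  congrArg Multiplicative.toAdd
    (valuationOfNeZeroMod_mk_of_valuation_eq_exp v 3 (u := descentUnit φ hw hB y) hk)

theorem localDescent_eq_neg_of_conj {v v' : HeightOneSpectrum R} {ι : M →+* M}
    (hιφ : ∀ a, ι (φ a) = φ a) (hιw : ι w = -w)
    (hv : ∀ z, v.valuation M (ι z) = v'.valuation M z) (P : (mordell B).Point) :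
    localDescent φ hw hB v' P = -localDescent φ hw hB v P := by
  rcases P with _ | ⟨x, y, h⟩
  · rw [← Point.zero_def, map_zero, map_zero, neg_zero]
  obtain ⟨k, hk⟩ := exists_valuation_eq_exp v' (map_sub_ne_zero_of_sq_eq φ hw hB y)
  have hk' : v.valuation M (φ ((mordell B).negY x y) - w) = exp k := by
    have hι : φ ((mordell B).negY x y) - w = -ι (φ y - w) := by
      simp only [negY, zero_mul, sub_zero, map_neg, map_sub, hιφ, hιw]
      ring
    rw [hι, Valuation.map_neg, hv, hk]
  rw [← map_neg, Point.neg_some, localDescent_some_of_valuation_eq_exp φ hw hB h hk,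
    localDescent_some_of_valuation_eq_exp φ hw hB _ hk']

theorem localDescent_eq_zero_of_valuation_two_mul_eq_one {v : HeightOneSpectrum R}
    (hv : v.valuation M (2 * w) = 1) (P : (mordell B).Point) : localDescent φ hw hB v P = 0 := by
  rcases P with _ | ⟨x, y, h⟩
  · exact map_zero _
  obtain ⟨k, hk⟩ := exists_valuation_eq_exp v (map_sub_ne_zero_of_sq_eq φ hw hB y)
  obtain ⟨k', hk'⟩ := exists_valuation_eq_exp v
    (map_sub_ne_zero_of_sq_eq φ hw hB ((mordell B).negY x y))
  have hδ := localDescent_some_of_valuation_eq_exp φ hw hB h hk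
  have hδ' := localDescent_some_of_valuation_eq_exp φ hw hB
    ((mordell B).nonsingular_neg x y |>.2 h) hk'
  rw [← Point.neg_some h, map_neg, hδ] at hδ'
  rw [hδ]
  rcases eq_or_ne k k' with rfl | hne
  · revert hδ'
    generalize (k : ZMod 3) = a
    decide +revert
  have hmax : max (exp k) (exp k') = (exp 0 : ℤᵐ⁰) := by
    have hsum : φ y - w + (φ ((mordell B).negY x y) - w) = -(2 * w) := by
      simp only [negY, zero_mul, sub_zero, map_neg]
      ring
    rw [← hk, ← hk', ← Valuation.map_add_of_distinct_val _ (by rwa [hk, hk', Ne, exp_inj]), hsum,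
      Valuation.map_neg, hv, exp_zero]
  rcases max_choice (exp k : ℤᵐ⁰) (exp k') with hm | hm
  · rw [hm, exp_inj] at hmax
    rw [hmax, Int.cast_zero]
  · rw [hm, exp_inj] at hmax
    rwa [hmax, Int.cast_zero, neg_eq_zero] at hδ'

end LocalDescent

section Places

open WithZero IsDedekindDomain

variable {F : Type*} [Field F]

/-- The place `X = r` of the rational function field. -/
noncomputable def placeAt (r : F) : HeightOneSpectrum F[X] where
  asIdeal := Ideal.span {X - C r}
  isPrime := (Ideal.span_singleton_prime (X_sub_C_ne_zero r)).2 (prime_X_sub_C r)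
  ne_bot := by simpa [Ideal.span_singleton_eq_bot] using X_sub_C_ne_zero r

theorem valuation_placeAt_algebraMap_eq_one {r : F} {p : F[X]} (hp : p.eval r ≠ 0) :
    (placeAt r).valuation (RatFunc F) (algebraMap _ _ p) = 1 := by
  rw [HeightOneSpectrum.valuation_eq_one_iff_notMem]
  exact fun h => hp (dvd_iff_isRoot.1 (Ideal.mem_span_singleton.1 h))

theorem valuation_placeAt_X_sub_C_self (r : F) :
    (placeAt r).valuation (RatFunc F) (RatFunc.X - RatFunc.C r) = exp (-1) := by
  rw [← RatFunc.algebraMap_X, ← RatFunc.algebraMap_C, ← map_sub,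
    HeightOneSpectrum.valuation_of_algebraMap,
    HeightOneSpectrum.intValuation_singleton _ (X_sub_C_ne_zero r) rfl]

theorem valuation_placeAt_C (r : F) {c : F} (hc : c ≠ 0) :
    (placeAt r).valuation (RatFunc F) (RatFunc.C c) = 1 := by
  simpa using valuation_placeAt_algebraMap_eq_one (r := r) (p := C c) (by simpa)

theorem valuation_placeAt_X_sub_C {r a : F} (h : a ≠ r) :
    (placeAt r).valuation (RatFunc F) (RatFunc.X - RatFunc.C a) = 1 := by
  rw [← RatFunc.algebraMap_X, ← RatFunc.algebraMap_C, ← map_sub]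
  exact valuation_placeAt_algebraMap_eq_one (by simpa [sub_eq_zero] using h.symm)

theorem valuation_placeAt_algebraMap {r : F} {p : F[X]} (hp : p ≠ 0) :
    (placeAt r).valuation (RatFunc F) (algebraMap _ _ p) = exp (-(p.rootMultiplicity r : ℤ)) := by
  obtain ⟨q, hpq, hq⟩ := exists_eq_pow_rootMultiplicity_mul_and_not_dvd p hp r
  conv_lhs => rw [hpq]
  rw [map_mul, map_mul, map_pow, map_pow, map_sub, RatFunc.algebraMap_X, RatFunc.algebraMap_C,
    valuation_placeAt_X_sub_C_self,
    valuation_placeAt_algebraMap_eq_one fun h => hq (dvd_iff_isRoot.2 h), mul_one, ← exp_nsmul]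
  simp

theorem valuation_placeAt {r : F} {f : RatFunc F} (hf : f ≠ 0) :
    (placeAt r).valuation (RatFunc F) f =
      exp ((f.denom.rootMultiplicity r : ℤ) - f.num.rootMultiplicity r) := by
  conv_lhs => rw [← f.num_div_denom]
  rw [map_div₀, valuation_placeAt_algebraMap (RatFunc.num_ne_zero hf),
    valuation_placeAt_algebraMap f.denom_ne_zero, ← exp_sub]
  congr 1
  ring

variable [IsAlgClosed F]

theorem exists_eq_pow_of_forall_dvd_rootMultiplicity {n : ℕ} (hn : n ≠ 0) {p : F[X]}
    (hp : ∀ r, n ∣ p.rootMultiplicity r) : ∃ q : F[X], p = q ^ n := by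
  classical
  obtain ⟨s, hs⟩ : ∃ s : Multiset F, p.roots = n • s :=
    Multiset.exists_smul_of_dvd_count _ fun a _ => by simpa using hp a
  obtain ⟨c, hc⟩ := IsAlgClosed.exists_pow_nat_eq p.leadingCoeff hn.bot_lt
  refine ⟨C c * (s.map fun a => X - C a).prod, ?_⟩
  conv_lhs => rw [(IsAlgClosed.splits p).eq_prod_roots, hs, ← hc]
  rw [Multiset.map_nsmul, Multiset.prod_nsmul, C_pow, mul_pow]

theorem eq_one_of_forall_valuationOfNeZeroMod_placeAt_eq_one {n : ℕ} (hn : n ≠ 0)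
    {z : (RatFunc F)ˣ ⧸ (powMonoidHom n : (RatFunc F)ˣ →* (RatFunc F)ˣ).range}
    (hz : ∀ r : F, (placeAt r).valuationOfNeZeroMod n z = 1) : z = 1 := by
  classical
  induction z using QuotientGroup.induction_on with
  | H u =>
  have hnum : u.val.num ≠ 0 := RatFunc.num_ne_zero u.ne_zero
  have hdenom := u.val.denom_ne_zero
  obtain ⟨q, hq⟩ : ∃ q : F[X], u.val.num * u.val.denom ^ (n - 1) = q ^ n := by
    refine exists_eq_pow_of_forall_dvd_rootMultiplicity hn fun r => ?_
    have hmod := hz r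
    rw [valuationOfNeZeroMod_mk_of_valuation_eq_exp _ n (valuation_placeAt u.ne_zero), ofAdd_eq_one,
      ZMod.intCast_zmod_eq_zero_iff_dvd] at hmod
    rw [← count_roots, roots_mul (mul_ne_zero hnum (pow_ne_zero _ hdenom)), roots_pow,
      Multiset.count_add, Multiset.count_nsmul, count_roots, count_roots,
      ← Int.natCast_dvd_natCast]
    have : ((u.val.num.rootMultiplicity r + (n - 1) * u.val.denom.rootMultiplicity r : ℕ) : ℤ) =
        n * u.val.denom.rootMultiplicity r -
          ((u.val.denom.rootMultiplicity r : ℤ) - u.val.num.rootMultiplicity r) := by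
      push_cast [Nat.one_le_iff_ne_zero.2 hn]
      ring
    exact this ▸ dvd_sub (dvd_mul_right _ _) hmod
  have hdenom' : algebraMap F[X] (RatFunc F) u.val.denom ≠ 0 := by simpa
  have hpow : u.val = (algebraMap _ _ q / algebraMap _ _ u.val.denom) ^ n := by
    rw [div_pow, ← map_pow, ← hq, map_mul, map_pow, ← mul_pow_sub_one hn]
    conv_lhs => rw [← u.val.num_div_denom]
    field_simp
  have hq0 : algebraMap _ _ q / algebraMap _ _ u.val.denom ≠ (0 : RatFunc F) := fun h =>
    u.ne_zero (by rw [hpow, h, zero_pow hn])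
  exact (QuotientGroup.eq_one_iff _).2 ⟨Units.mk0 _ hq0, Units.ext hpow.symm⟩

theorem monoidWithZeroHom_ext_of_C_of_X_sub_C {G : Type*} [CommGroupWithZero G]
    {f g : RatFunc F →*₀ G} (hC : ∀ c, f (RatFunc.C c) = g (RatFunc.C c))
    (hX : ∀ a, f (RatFunc.X - RatFunc.C a) = g (RatFunc.X - RatFunc.C a)) : f = g := by
  have hpoly (p : F[X]) : f (algebraMap _ _ p) = g (algebraMap _ _ p) := by
    rw [(IsAlgClosed.splits p).eq_prod_roots]
    simp [map_multiset_prod, Multiset.map_map, hC, hX]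
  ext z
  rw [← z.num_div_denom, map_div₀, map_div₀, hpoly, hpoly]

end Places

section DoubleCover

open WithZero

variable {F : Type*} [Field F]

/-- The coefficient of the quadratic twist `y² = x³ + X²(X² + 1)` of `y² = x³ + X + X⁻¹` by `X`. -/
noncomputable def twistCoeff (F : Type*) [Field F] : RatFunc F :=
  RatFunc.X ^ 2 * (RatFunc.X ^ 2 + 1)

theorem transcendental_neg_inv_X : Transcendental F (-RatFunc.X⁻¹ : RatFunc F) :=
  transcendental_of_intDegree_ne_zero (by simp)

/-- The deck transformation `X ↦ -1/X` of the double cover on which `twistCoeff` is a square. -/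
noncomputable def deckMap : RatFunc F →+* RatFunc F :=
  substX _ transcendental_neg_inv_X

theorem valuation_placeAt_deckMap [IsAlgClosed F] {r s : F} (hrs : r * s = -1) (z : RatFunc F) :
    (placeAt r).valuation (RatFunc F) (deckMap z) = (placeAt s).valuation (RatFunc F) z := by
  have hr : r ≠ 0 := by rintro rfl; simp at hrs
  suffices h : ((placeAt r).valuation (RatFunc F)).toMonoidWithZeroHom.comp
        (deckMap : RatFunc F →+* RatFunc F).toMonoidWithZeroHom =
      ((placeAt s).valuation (RatFunc F)).toMonoidWithZeroHom from DFunLike.congr_fun h z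
  refine monoidWithZeroHom_ext_of_C_of_X_sub_C (fun c => ?_) fun a => ?_
  · change (placeAt r).valuation (RatFunc F) (deckMap (RatFunc.C c)) =
      (placeAt s).valuation (RatFunc F) (RatFunc.C c)
    rcases eq_or_ne c 0 with rfl | hc
    · simp
    · rw [deckMap, substX_C, valuation_placeAt_C r hc, valuation_placeAt_C s hc]
  · change (placeAt r).valuation (RatFunc F) (deckMap (RatFunc.X - RatFunc.C a)) =
      (placeAt s).valuation (RatFunc F) (RatFunc.X - RatFunc.C a)
    have hX : (placeAt r).valuation (RatFunc F) RatFunc.X = 1 := by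
      simpa using valuation_placeAt_X_sub_C hr.symm
    have hdeck : deckMap (RatFunc.X - RatFunc.C a) =
        -((1 + RatFunc.C a * RatFunc.X) / RatFunc.X) := by
      have := RatFunc.X_ne_zero (K := F)
      rw [deckMap, map_sub, substX_X, substX_C]
      field_simp
      ring
    rw [hdeck, Valuation.map_neg, map_div₀, hX, div_one]
    rcases eq_or_ne a s with rfl | has
    · have hlin : 1 + RatFunc.C a * RatFunc.X = RatFunc.C a * (RatFunc.X - RatFunc.C r) := by
        rw [mul_sub, ← map_mul, mul_comm a, hrs, map_neg, map_one]
        ring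
      rw [hlin, map_mul, valuation_placeAt_C r (by rintro rfl; simp at hrs), one_mul,
        valuation_placeAt_X_sub_C_self, valuation_placeAt_X_sub_C_self]
    · rw [valuation_placeAt_X_sub_C has]
      have := valuation_placeAt_algebraMap_eq_one (r := r) (p := 1 + C a * X) (by
        simp only [eval_add, eval_one, eval_mul, eval_C, eval_X]
        intro h
        exact has (mul_left_cancel₀ hr (by linear_combination h - hrs)))
      simpa only [map_add, map_one, map_mul, RatFunc.algebraMap_C, RatFunc.algebraMap_X] using this

variable [CharZero F]

theorem not_isSquare_X_sq_add_one : ¬ IsSquare (RatFunc.X ^ 2 + 1 : RatFunc F) := by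
  rintro ⟨t, ht⟩
  have ht' : algebraMap F[X] (RatFunc F) (X ^ 2 + 1) = t ^ 2 := by simpa [← sq] using ht
  obtain ⟨p, rfl⟩ := IsIntegrallyClosed.exists_algebraMap_eq_of_isIntegral_pow (R := F[X])
    two_pos (ht' ▸ isIntegral_algebraMap)
  have hp : (X ^ 2 + 1 : F[X]) = p * p :=
    RatFunc.algebraMap_injective F (by rw [ht', sq, map_mul])
  have hunit : IsUnit p := squarefree_X_sq_add_one p hp.symm.dvd
  have hdeg : (X ^ 2 + 1 : F[X]).natDegree = 2 := by compute_degree!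
  rw [hp, natDegree_eq_zero_of_isUnit (hunit.mul hunit)] at hdeg
  exact two_ne_zero hdeg.symm

theorem not_isSquare_twistCoeff : ¬ IsSquare (twistCoeff F) := by
  rintro ⟨t, ht⟩
  have hX : (RatFunc.X : RatFunc F) ≠ 0 := RatFunc.X_ne_zero
  refine not_isSquare_X_sq_add_one (F := F) ⟨t / RatFunc.X, ?_⟩
  rw [twistCoeff] at ht
  field_simp
  linear_combination ht

theorem transcendental_X_sub_inv_X_div_two :
    Transcendental F ((RatFunc.X - RatFunc.X⁻¹) / 2 : RatFunc F) := by
  refine transcendental_of_intDegree_ne_zero ?_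
  have hX : (RatFunc.X : RatFunc F) ≠ 0 := RatFunc.X_ne_zero
  have hdiv : ((RatFunc.X - RatFunc.X⁻¹) / 2 : RatFunc F) =
      algebraMap _ _ (X ^ 2 - C 1 : F[X]) / algebraMap _ _ (C 2 * X : F[X]) := by
    simp only [map_sub, map_pow, map_mul, RatFunc.algebraMap_X, map_one, map_ofNat]
    field_simp
  rw [hdiv, RatFunc.intDegree_div, RatFunc.intDegree_polynomial, RatFunc.intDegree_polynomial,
    natDegree_X_pow_sub_C, natDegree_C_mul_X _ two_ne_zero]
  · norm_num
  · exact RatFunc.algebraMap_ne_zero (X_pow_sub_C_ne_zero two_pos 1)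
  · exact RatFunc.algebraMap_ne_zero (mul_ne_zero (C_ne_zero.2 two_ne_zero) X_ne_zero)

/-- The double cover `X ↦ (X - 1/X) / 2`, which parametrizes the conic `v² = X² + 1`. -/
noncomputable def coverMap : RatFunc F →+* RatFunc F :=
  substX _ transcendental_X_sub_inv_X_div_two

/-- The square root `(X² - X⁻²) / 4` of the image of `twistCoeff` under `coverMap`. -/
noncomputable def sqrtTwistCoeff (F : Type*) [Field F] : RatFunc F :=
  (RatFunc.X ^ 2 - (RatFunc.X ^ 2)⁻¹) / 4

theorem coverMap_X : coverMap (RatFunc.X : RatFunc F) = (RatFunc.X - RatFunc.X⁻¹) / 2 :=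
  substX_X _

theorem coverMap_C (a : F) : coverMap (RatFunc.C a) = RatFunc.C a :=
  substX_C _ a

theorem sqrtTwistCoeff_sq : sqrtTwistCoeff F ^ 2 = coverMap (twistCoeff F) := by
  have hX : (RatFunc.X : RatFunc F) ≠ 0 := RatFunc.X_ne_zero
  simp only [sqrtTwistCoeff, twistCoeff, map_mul, map_add, map_pow, map_one, coverMap_X]
  field_simp
  ring

theorem deckMap_coverMap (f : RatFunc F) : deckMap (coverMap f) = coverMap f :=
  RingHom.congr_fun (f := deckMap.comp coverMap) (g := coverMap)
    (ringHom_ext_of_C_of_X (by simp [deckMap, coverMap]) (by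
      simp only [RingHom.comp_apply, coverMap_X, map_div₀, map_sub, map_inv₀, map_ofNat, deckMap,
        substX_X, inv_neg, inv_inv]
      ring)) f

omit [CharZero F] in
theorem deckMap_sqrtTwistCoeff : deckMap (sqrtTwistCoeff F) = -sqrtTwistCoeff F := by
  simp only [sqrtTwistCoeff, deckMap, map_div₀, map_sub, map_inv₀, map_pow, map_ofNat, substX_X,
    neg_sq, inv_pow, inv_inv]
  ring

theorem exists_eq_coverMap_add_coverMap_mul_sqrtTwistCoeff (f : RatFunc F) :
    ∃ m n, f = coverMap m + coverMap n * sqrtTwistCoeff F := by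
  have hX : (RatFunc.X : RatFunc F) ≠ 0 := RatFunc.X_ne_zero
  obtain ⟨m, n, rfl⟩ := exists_eq_map_add_map_mul_X (coverMap (F := F))
    (fun a => ⟨_, coverMap_C a⟩) (p := 2 * RatFunc.X) (q := 1) (by
      simp only [map_mul, map_ofNat, map_one, coverMap_X]
      field_simp
      ring) f
  refine ⟨m + n * RatFunc.X, n / RatFunc.X, ?_⟩
  have hcover : coverMap (RatFunc.X : RatFunc F) ≠ 0 := (_root_.map_ne_zero _).2 hX
  have hXw : (RatFunc.X - coverMap RatFunc.X) * coverMap RatFunc.X = sqrtTwistCoeff F := by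
    rw [coverMap_X, sqrtTwistCoeff]
    field_simp
    ring
  simp only [map_add, map_mul, map_div₀]
  field_simp
  linear_combination coverMap n * hXw

theorem valuation_placeAt_two (r : F) : (placeAt r).valuation (RatFunc F) 2 = 1 := by
  simpa only [map_ofNat] using valuation_placeAt_C r (two_ne_zero (α := F))

theorem valuation_placeAt_two_mul_sqrtTwistCoeff {r : F} (h0 : r ≠ 0) (h1 : r ^ 4 ≠ 1) :
    (placeAt r).valuation (RatFunc F) (2 * sqrtTwistCoeff F) = 1 := by
  have hX : (placeAt r).valuation (RatFunc F) RatFunc.X = 1 := by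
    simpa using valuation_placeAt_X_sub_C h0.symm
  have hw : 2 * sqrtTwistCoeff F =
      algebraMap _ _ (X ^ 4 - 1 : F[X]) / (2 * RatFunc.X ^ 2) := by
    have hX : (RatFunc.X : RatFunc F) ≠ 0 := RatFunc.X_ne_zero
    rw [sqrtTwistCoeff, map_sub, map_pow, RatFunc.algebraMap_X, map_one]
    field_simp
    ring
  rw [hw, map_div₀, valuation_placeAt_algebraMap_eq_one (by simpa [sub_eq_zero] using h1), map_mul,
    valuation_placeAt_two, map_pow, hX]
  simp

end DoubleCover

section TwistDescent

open WeierstrassCurve.Affine WithZero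

variable {F : Type*} [Field F] [CharZero F] [DecidableEq (RatFunc F)]

/-- The reduction modulo `3`, at the place `X = r` of the double cover, of the descent map on
`y² = x³ + X²(X² + 1)`. -/
noncomputable abbrev twistDescent (r : F) : (mordell (twistCoeff F)).Point →+ ZMod 3 :=
  localDescent coverMap sqrtTwistCoeff_sq not_isSquare_twistCoeff (placeAt r)

theorem twistDescent_eq_neg [IsAlgClosed F] {r s : F} (hrs : r * s = -1)
    (P : (mordell (twistCoeff F)).Point) : twistDescent s P = -twistDescent r P :=
  localDescent_eq_neg_of_conj _ _ _ deckMap_coverMap deckMap_sqrtTwistCoeff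
    (valuation_placeAt_deckMap hrs) P

theorem twistDescent_eq_zero [IsAlgClosed F] {P : (mordell (twistCoeff F)).Point}
    (h0 : twistDescent 0 P = 0) (h1 : twistDescent 1 P = 0) (r : F) : twistDescent r P = 0 := by
  by_cases hr0 : r = 0
  · rwa [hr0]
  by_cases hr4 : r ^ 4 = 1
  · have hfac : (r - 1) * ((r + 1) * (r * r + 1)) = 0 := by linear_combination hr4
    rcases mul_eq_zero.1 hfac with hr | hr
    · rwa [sub_eq_zero.1 hr]
    rcases mul_eq_zero.1 hr with hr | hr
    · rw [twistDescent_eq_neg (r := 1) (by linear_combination hr), h1, neg_zero]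
    · have := twistDescent_eq_neg (r := r) (s := r) (by linear_combination hr) P
      revert this
      generalize twistDescent r P = a
      decide +revert
  · exact localDescent_eq_zero_of_valuation_two_mul_eq_one _ _ _
      (valuation_placeAt_two_mul_sqrtTwistCoeff hr0 hr4) P

theorem exists_sqrtNegThree_eq_of_twistDescent_eq_zero [IsAlgClosed F] {ω : RatFunc F}
    (hω : ω ^ 2 + ω + 1 = 0) {P : (mordell (twistCoeff F)).Point}
    (h0 : twistDescent 0 P = 0) (h1 : twistDescent 1 P = 0) :
    ∃ Q, sqrtNegThree (twistCoeff F) hω Q = P :=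
  exists_sqrtNegThree_eq_of_descentMap_eq_zero coverMap hω sqrtTwistCoeff_sq
    not_isSquare_twistCoeff exists_eq_coverMap_add_coverMap_mul_sqrtTwistCoeff
    (eq_one_of_forall_valuationOfNeZeroMod_placeAt_eq_one three_ne_zero
      (twistDescent_eq_zero h0 h1))

omit [DecidableEq (RatFunc F)] in
theorem mordell_twistCoeff_nonsingular_iff {x y : RatFunc F} :
    (mordell (twistCoeff F)).Nonsingular x y ↔ y ^ 2 = x ^ 3 + twistCoeff F :=
  mordell_nonsingular_iff_of_ne_zero fun h => not_isSquare_twistCoeff (h ▸ IsSquare.zero)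

omit [CharZero F] [DecidableEq (RatFunc F)] in
theorem cubicPoint_equation {c e : F} (hc : c ^ 3 = 2 * e) (he : e ^ 2 = 1) :
    (RatFunc.X ^ 2 + RatFunc.C e * RatFunc.X) ^ 2 =
      (RatFunc.C c * RatFunc.X) ^ 3 + twistCoeff F := by
  have hc' := congrArg (RatFunc.C (K := F)) hc
  have he' := congrArg (RatFunc.C (K := F)) he
  simp only [map_pow, map_mul, map_one, map_ofNat] at hc' he'
  rw [twistCoeff]
  linear_combination RatFunc.X ^ 2 * he' - RatFunc.X ^ 3 * hc'

/-- The point `(cX, X² + eX)` of `y² = x³ + X²(X² + 1)`, where `e = ±1` and `c³ = 2e`. -/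
noncomputable def cubicPoint {c e : F} (hc : c ^ 3 = 2 * e) (he : e ^ 2 = 1) :
    (mordell (twistCoeff F)).Point :=
  .some _ _ (mordell_twistCoeff_nonsingular_iff.2 (cubicPoint_equation hc he))

omit [DecidableEq (RatFunc F)] in
theorem coverMap_sub_sqrtTwistCoeff {e : F} (he : e ^ 2 = 1) :
    coverMap (RatFunc.X ^ 2 + RatFunc.C e * RatFunc.X) - sqrtTwistCoeff F =
      RatFunc.C e * (RatFunc.X - RatFunc.C 1) * (RatFunc.X - RatFunc.C (-1)) *
        (RatFunc.X - RatFunc.C e) / (2 * (RatFunc.X - RatFunc.C 0) ^ 2) := by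
  have hX : (RatFunc.X : RatFunc F) ≠ 0 := RatFunc.X_ne_zero
  have he' := congrArg (RatFunc.C (K := F)) he
  simp only [map_pow, map_one] at he'
  simp only [map_add, map_pow, map_mul, coverMap_X, coverMap_C, sqrtTwistCoeff, map_one, map_neg,
    map_zero, sub_zero]
  field_simp
  linear_combination 8 * (RatFunc.X ^ 2 - 1) * he'

theorem twistDescent_zero_cubicPoint {c e : F} (hc : c ^ 3 = 2 * e) (he : e ^ 2 = 1) :
    twistDescent 0 (cubicPoint hc he) = 2 := by
  have he0 : e ≠ 0 := by rintro rfl; simp at he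
  refine localDescent_some_of_valuation_eq_exp _ _ _ _ (k := 2) ?_
  rw [coverMap_sub_sqrtTwistCoeff he]
  simp only [map_div₀, map_mul, map_pow, valuation_placeAt_C _ he0, valuation_placeAt_X_sub_C he0,
    valuation_placeAt_X_sub_C one_ne_zero, valuation_placeAt_X_sub_C (neg_ne_zero.2 one_ne_zero),
    valuation_placeAt_X_sub_C_self, valuation_placeAt_two, one_mul, ← exp_nsmul, one_div, ← exp_neg]
  simp

theorem twistDescent_one_cubicPoint_one {c : F} (hc : c ^ 3 = 2 * 1) :
    twistDescent 1 (cubicPoint hc (one_pow 2)) = 1 := by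
  refine (localDescent_some_of_valuation_eq_exp _ _ _ _ (k := -2) ?_).trans (by decide)
  have h : (-1 : F) ≠ 1 := by norm_num
  rw [coverMap_sub_sqrtTwistCoeff (one_pow 2)]
  simp only [map_div₀, map_mul, map_pow, valuation_placeAt_C _ one_ne_zero,
    valuation_placeAt_X_sub_C h, valuation_placeAt_X_sub_C zero_ne_one,
    valuation_placeAt_X_sub_C_self, valuation_placeAt_two, one_mul, mul_one, one_pow, div_one,
    ← exp_add]
  norm_num

theorem twistDescent_one_cubicPoint_neg_one {c : F} (hc : c ^ 3 = 2 * -1) :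
    twistDescent 1 (cubicPoint hc neg_one_sq) = 2 := by
  refine (localDescent_some_of_valuation_eq_exp _ _ _ _ (k := -1) ?_).trans (by decide)
  have h : (-1 : F) ≠ 1 := by norm_num
  have h' : (-1 : F) ≠ 0 := by norm_num
  rw [coverMap_sub_sqrtTwistCoeff neg_one_sq]
  simp only [map_div₀, map_mul, map_pow, valuation_placeAt_C _ h',
    valuation_placeAt_X_sub_C h, valuation_placeAt_X_sub_C zero_ne_one,
    valuation_placeAt_X_sub_C_self, valuation_placeAt_two, one_mul, mul_one, one_pow, div_one]

theorem exists_sqrtNegThree_eq_add_nsmul_add_nsmul [IsAlgClosed F] {ω : RatFunc F}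
    (hω : ω ^ 2 + ω + 1 = 0) {c c' : F} (hc : c ^ 3 = 2 * 1) (hc' : c' ^ 3 = 2 * -1)
    (P : (mordell (twistCoeff F)).Point) :
    ∃ (k l : ℕ) (Q : (mordell (twistCoeff F)).Point), sqrtNegThree (twistCoeff F) hω Q =
      P + k • cubicPoint hc (one_pow 2) + l • cubicPoint hc' neg_one_sq := by
  have hsolve : ∀ a b : ZMod 3, ∃ k l : ZMod 3,
      a + k * 2 + l * 2 = 0 ∧ b + k * 1 + l * 2 = 0 := by decide
  obtain ⟨k, l, h0, h1⟩ := hsolve (twistDescent 0 P) (twistDescent 1 P)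
  refine ⟨k.val, l.val, exists_sqrtNegThree_eq_of_twistDescent_eq_zero hω ?_ ?_⟩
  · simpa [twistDescent_zero_cubicPoint] using h0
  · simpa [twistDescent_one_cubicPoint_one, twistDescent_one_cubicPoint_neg_one] using h1

end TwistDescent

section Height

variable {F : Type*} [Field F]

/-- The polynomial `X²(X² + 1)`, whose value in `F(X)` is `twistCoeff F`. -/
noncomputable def twistPoly (F : Type*) [Field F] : F[X] := X ^ 2 * (X ^ 2 + 1)

theorem algebraMap_twistPoly : algebraMap F[X] (RatFunc F) (twistPoly F) = twistCoeff F := by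
  simp [twistPoly, twistCoeff]

/-- The numerator of `x³ + 4X²(X² + 1)` for `x = p / q`. -/
noncomputable def isogenyNumerator (p q : F[X]) : F[X] :=
  p ^ 3 + C 4 * twistPoly F * q ^ 3

/-- A height on the `x`-coordinates of `y² = x³ + X²(X² + 1)`: the degree of
`isogenyNumerator x.num x.denom`. -/
noncomputable def mordellHeight (x : RatFunc F) : ℕ :=
  max (3 * x.num.natDegree) (3 * x.denom.natDegree + 4)

theorem natDegree_twistPoly : (twistPoly F).natDegree = 4 := by
  rw [twistPoly]
  compute_degree!

theorem twistPoly_ne_zero : twistPoly F ≠ 0 :=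
  ne_zero_of_natDegree_gt (n := 0) (by rw [natDegree_twistPoly]; norm_num)

theorem isogenyNumerator_mul_denom {x x' : RatFunc F}
    (h : -3 * x ^ 2 * x' = x ^ 3 + 4 * twistCoeff F) :
    isogenyNumerator x.num x.denom * x'.denom = C (-3) * x.num ^ 2 * x.denom * x'.num := by
  have hq : algebraMap F[X] (RatFunc F) x.denom ≠ 0 := RatFunc.algebraMap_ne_zero x.denom_ne_zero
  have hq' : algebraMap F[X] (RatFunc F) x'.denom ≠ 0 :=
    RatFunc.algebraMap_ne_zero x'.denom_ne_zero
  apply RatFunc.algebraMap_injective F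
  rw [← x.num_div_denom, ← x'.num_div_denom, ← algebraMap_twistPoly] at h
  simp only [isogenyNumerator, map_add, map_mul, map_pow, map_neg, map_ofNat]
  field_simp at h
  linear_combination -h

variable [CharZero F]

theorem natDegree_isogenyNumerator (x : RatFunc F) :
    (isogenyNumerator x.num x.denom).natDegree = mordellHeight x := by
  have hleft : (x.num ^ 3).natDegree = 3 * x.num.natDegree := natDegree_pow _ _
  have hright : (C 4 * twistPoly F * x.denom ^ 3).natDegree = 3 * x.denom.natDegree + 4 := by
    rw [mul_assoc, natDegree_C_mul (by norm_num), natDegree_mul twistPoly_ne_zero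
      (pow_ne_zero 3 x.denom_ne_zero), natDegree_twistPoly, natDegree_pow, add_comm]
  rw [isogenyNumerator, mordellHeight, ← hleft, ← hright]
  rcases lt_or_gt_of_ne
    (show (x.num ^ 3).natDegree ≠ (C 4 * twistPoly F * x.denom ^ 3).natDegree by omega)
    with hlt | hlt
  · rw [natDegree_add_eq_right_of_natDegree_lt hlt, max_eq_right hlt.le]
  · rw [natDegree_add_eq_left_of_natDegree_lt hlt, max_eq_left hlt.le]

theorem isogenyNumerator_num_denom_ne_zero (x : RatFunc F) :
    isogenyNumerator x.num x.denom ≠ 0 := by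
  refine ne_zero_of_natDegree_gt (n := 0) ?_
  rw [natDegree_isogenyNumerator]
  exact lt_max_of_lt_right (by omega)

theorem three_le_natDegree_of_twistPoly_dvd_sq {p : F[X]} (hp : p ≠ 0)
    (h : twistPoly F ∣ p ^ 2) : 3 ≤ p.natDegree := by
  have hX : X ∣ p := 
    prime_X.dvd_of_dvd_pow ((dvd_mul_of_dvd_left (dvd_pow_self X two_ne_zero) _).trans h)
  have hX2 : X ^ 2 + 1 ∣ p :=
    (squarefree_X_sq_add_one.dvd_pow_iff_dvd two_ne_zero).1 ((dvd_mul_left _ _).trans h)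
  have hcop : IsCoprime (X : F[X]) (X ^ 2 + 1) := ⟨-X, 1, by ring⟩
  have hdeg : (X * (X ^ 2 + 1) : F[X]).natDegree = 3 := by compute_degree!
  exact hdeg ▸ natDegree_le_of_dvd (hcop.mul_dvd hX hX2) hp

theorem exists_isogenyNumerator_eq_num_mul {x x' : RatFunc F}
    (h : -3 * x ^ 2 * x' = x ^ 3 + 4 * twistCoeff F) :
    ∃ d, isogenyNumerator x.num x.denom = x'.num * d ∧ d ∣ twistPoly F ∧ d ∣ x.num ^ 2 := by
  have hmul := isogenyNumerator_mul_denom h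
  obtain ⟨d, hd⟩ : x'.num ∣ isogenyNumerator x.num x.denom :=
    x'.isCoprime_num_denom.dvd_of_dvd_mul_right (hmul ▸ dvd_mul_left _ _)
  have hdN : d ∣ isogenyNumerator x.num x.denom := hd ▸ dvd_mul_left _ _
  have hdq : IsCoprime d x.denom := by
    refine IsCoprime.of_isCoprime_of_dvd_left ?_ hdN
    have hcop := (x.isCoprime_num_denom.pow_left (m := 3)).add_mul_right_left
      (C 4 * twistPoly F * x.denom ^ 2)
    rwa [mul_assoc, ← pow_succ] at hcop
  have hx' : x'.num ≠ 0 := left_ne_zero_of_mul (hd ▸ isogenyNumerator_num_denom_ne_zero x)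
  have hdp : d ∣ x.num ^ 2 := by
    have hd' : C (-3) * x.num ^ 2 * x.denom = d * x'.denom :=
      mul_right_cancel₀ hx' (by rw [← hmul, hd]; ring)
    have h3 : IsUnit (C (-3) : F[X]) := isUnit_C.2 (by simp)
    exact h3.dvd_mul_left.1 (hdq.dvd_of_dvd_mul_right ⟨_, hd'⟩)
  refine ⟨d, hd, ?_, hdp⟩
  have h4 : IsUnit (C 4 : F[X]) := isUnit_C.2 (by simp)
  refine h4.dvd_mul_left.1 ((hdq.pow_right (n := 3)).dvd_of_dvd_mul_right ?_)
  exact (dvd_add_right (by rw [pow_succ]; exact hdp.mul_right _)).1 hdN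

theorem mordellHeight_lt {x x' : RatFunc F} (hx : x ≠ 0)
    (h : -3 * x ^ 2 * x' = x ^ 3 + 4 * twistCoeff F) : mordellHeight x < mordellHeight x' := by
  have hp : x.num ≠ 0 := RatFunc.num_ne_zero hx
  obtain ⟨d, hN, hdF, hdp⟩ := exists_isogenyNumerator_eq_num_mul h
  have hdeg := natDegree_isogenyNumerator x
  have hHx : 4 ≤ mordellHeight x := le_max_of_le_right (by omega)
  have hN0 := isogenyNumerator_num_denom_ne_zero x
  rw [hN] at hdeg hN0
  rw [natDegree_mul (left_ne_zero_of_mul hN0) (right_ne_zero_of_mul hN0)] at hdeg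
  have hd4 : d.natDegree ≤ 4 :=
    natDegree_twistPoly (F := F) ▸ natDegree_le_of_dvd hdF twistPoly_ne_zero
  have hdp2 : d.natDegree ≤ 2 * x.num.natDegree :=
    natDegree_pow x.num 2 ▸ natDegree_le_of_dvd hdp (pow_ne_zero 2 hp)
  have hd4' : d.natDegree = 4 → 3 ≤ x.num.natDegree := fun h4 =>
    three_le_natDegree_of_twistPoly_dvd_sq hp <|
      (associated_of_dvd_of_natDegree_le hdF twistPoly_ne_zero
        (by rw [natDegree_twistPoly, h4])).symm.dvd.trans hdp
  have hpx : 3 * x.num.natDegree ≤ mordellHeight x := le_max_left _ _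
  have hpx' : 3 * x'.num.natDegree ≤ mordellHeight x' := le_max_left _ _
  omega

end Height

section FixedPoints

open WeierstrassCurve.Affine

variable {F : Type*} [Field F] [CharZero F] [DecidableEq (RatFunc F)]

theorem mordellHeight_lt_of_sqrtNegThree_some_eq_some {ω : RatFunc F} (hω : ω ^ 2 + ω + 1 = 0)
    {x y x' y' : RatFunc F} {h : (mordell (twistCoeff F)).Nonsingular x y}
    {h' : (mordell (twistCoeff F)).Nonsingular x' y'}
    (heq : sqrtNegThree (twistCoeff F) hω (.some x y h) = .some x' y' h') :
    mordellHeight x < mordellHeight x' := by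
  have hx : x ≠ 0 := mordell_x_ne_zero not_isSquare_twistCoeff h
  have hω' : ω - ω ^ 2 ≠ 0 :=
    ne_zero_pow two_ne_zero (by rw [sub_sq_sq_eq_neg_three hω]; norm_num)
  obtain ⟨l, hl⟩ : ∃ l, (ω - ω ^ 2) * x * l = 2 * y :=
    ⟨_, mul_div_cancel₀ _ (mul_ne_zero hω' hx)⟩
  obtain ⟨_, hsome⟩ := sqrtNegThree_some hω h hx hl
  obtain rfl : l ^ 2 + x = x' := by
    rw [hsome] at heq
    injection heq
  refine mordellHeight_lt hx ?_
  linear_combination ((ω - ω ^ 2) * x * l + 2 * y) * hl -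
    l ^ 2 * x ^ 2 * sub_sq_sq_eq_neg_three hω + 4 * mordell_twistCoeff_nonsingular_iff.1 h

theorem eq_zero_of_forall_exists_sqrtNegThree_eq {ω : RatFunc F} (hω : ω ^ 2 + ω + 1 = 0)
    {s : Set (mordell (twistCoeff F)).Point}
    (hs : ∀ D ∈ s, ∃ D' ∈ s, sqrtNegThree (twistCoeff F) hω D' = D)
    {D : (mordell (twistCoeff F)).Point} (hD : D ∈ s) : D = 0 := by
  rcases D with _ | ⟨x, y, h⟩
  · rfl
  exfalso
  induction hn : mordellHeight x using Nat.strong_induction_on generalizing x y with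
  | _ n ih =>
    obtain ⟨_ | ⟨x', y', h'⟩, hD', heq⟩ := hs _ hD
    · rw [← Point.zero_def, map_zero] at heq
      exact Point.some_ne_zero h heq.symm
    · exact ih _ (hn ▸ mordellHeight_lt_of_sqrtNegThree_some_eq_some hω heq) x' y' h' hD' rfl

omit [CharZero F] [DecidableEq (RatFunc F)] in
theorem mapCoeff_twistCoeff (σ : F →+* F) : mapCoeff σ (twistCoeff F) = twistCoeff F := by
  simp only [twistCoeff, map_mul, map_add, map_pow, map_one, mapCoeff_X]

/-- The action of `σ` on the coefficients of the points of `y² = x³ + X²(X² + 1)`. -/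
noncomputable def mapCoeffPoint (σ : F →+* F) :
    (mordell (twistCoeff F)).Point →+ (mordell (twistCoeff F)).Point :=
  twistMap (mapCoeff σ) 1 one_ne_zero (by rw [one_pow, one_mul, mapCoeff_twistCoeff])

theorem mapCoeffPoint_some (σ : F →+* F) {x y : RatFunc F}
    (h : (mordell (twistCoeff F)).Nonsingular x y) :
    ∃ h', mapCoeffPoint σ (.some x y h) = .some (mapCoeff σ x) (mapCoeff σ y) h' := by
  have hmap := twistMap_some (mapCoeff σ) one_ne_zero
    (by rw [one_pow, one_mul, mapCoeff_twistCoeff] :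
      1 ^ 6 * mapCoeff σ (twistCoeff F) = twistCoeff F) h
  simp only [one_pow, one_mul] at hmap
  exact ⟨_, hmap⟩

theorem mapCoeffPoint_cubicPoint {σ : F →+* F} {c e : F} (hc : c ^ 3 = 2 * e) (he : e ^ 2 = 1)
    (hσc : σ c = c) (hσe : σ e = e) : mapCoeffPoint σ (cubicPoint hc he) = cubicPoint hc he := by
  obtain ⟨_, hmap⟩ := mapCoeffPoint_some σ (mordell_twistCoeff_nonsingular_iff.2
    (cubicPoint_equation hc he))
  simp only [map_mul, map_add, map_pow, mapCoeff_X, mapCoeff_C, hσc, hσe] at hmap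
  exact hmap

theorem mapCoeffPoint_mulCubeRoot {σ : F →+* F} {ζ : RatFunc F} (hζ : ζ ^ 3 = 1)
    (hσζ : mapCoeff σ ζ = ζ) (P : (mordell (twistCoeff F)).Point) :
    mapCoeffPoint σ (mulCubeRoot (twistCoeff F) hζ P) =
      mulCubeRoot (twistCoeff F) hζ (mapCoeffPoint σ P) := by
  rcases P with _ | ⟨x, y, h⟩
  · rfl
  obtain ⟨h₁, hmul⟩ := mulCubeRoot_some hζ h
  obtain ⟨_, hmap_mul⟩ := mapCoeffPoint_some σ h₁
  obtain ⟨h₂, hmap⟩ := mapCoeffPoint_some σ h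
  obtain ⟨_, hmul_map⟩ := mulCubeRoot_some hζ h₂
  rw [hmul, hmap_mul, hmap, hmul_map]
  simp only [map_mul, hσζ]

theorem mapCoeffPoint_sqrtNegThree {σ : F →+* F} {ω : RatFunc F} (hω : ω ^ 2 + ω + 1 = 0)
    (hσω : mapCoeff σ ω = ω) (P : (mordell (twistCoeff F)).Point) :
    mapCoeffPoint σ (sqrtNegThree (twistCoeff F) hω P) =
      sqrtNegThree (twistCoeff F) hω (mapCoeffPoint σ P) := by
  simp only [sqrtNegThree, AddMonoidHom.sub_apply, map_sub]
  rw [mapCoeffPoint_mulCubeRoot _ hσω, mapCoeffPoint_mulCubeRoot _ (by rw [map_pow, hσω])]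

theorem mapCoeffPoint_eq_self [IsAlgClosed F] {σ : F →+* F} {c ω : F} (hc : c ^ 3 = 2)
    (hω : ω ^ 2 + ω + 1 = 0) (hσc : σ c = c) (hσω : σ ω = ω)
    (P : (mordell (twistCoeff F)).Point) : mapCoeffPoint σ P = P := by
  have hω' : RatFunc.C ω ^ 2 + RatFunc.C ω + 1 = 0 := by
    simpa using congrArg RatFunc.C hω
  have hσω' : mapCoeff σ (RatFunc.C ω) = RatFunc.C ω := by rw [mapCoeff_C, hσω]
  have hc₁ : c ^ 3 = 2 * 1 := by rw [hc, mul_one]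
  have hc₂ : (-c) ^ 3 = 2 * -1 := by linear_combination -hc
  refine sub_eq_zero.1 (eq_zero_of_forall_exists_sqrtNegThree_eq hω'
    (s := Set.range fun P => mapCoeffPoint σ P - P) ?_ ⟨P, rfl⟩)
  rintro _ ⟨P, rfl⟩
  obtain ⟨k, l, Q, hQ⟩ := exists_sqrtNegThree_eq_add_nsmul_add_nsmul hω' hc₁ hc₂ P
  refine ⟨_, ⟨Q, rfl⟩, ?_⟩
  have hfix₁ := mapCoeffPoint_cubicPoint hc₁ (one_pow 2) hσc (map_one σ)
  have hfix₂ := mapCoeffPoint_cubicPoint hc₂ neg_one_sq (by rw [map_neg, hσc])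
    (by rw [map_neg, map_one])
  rw [map_sub, ← mapCoeffPoint_sqrtNegThree hω' hσω', hQ, map_add, map_add, map_nsmul, map_nsmul,
    hfix₁, hfix₂, add_sub_add_right_eq_sub, add_sub_add_right_eq_sub]

omit [DecidableEq (RatFunc F)] in
theorem mapCoeff_eq_self_of_sq_eq [IsAlgClosed F] {σ : F →+* F} {c ω : F} (hc : c ^ 3 = 2)
    (hω : ω ^ 2 + ω + 1 = 0) (hσc : σ c = c) (hσω : σ ω = ω) {x y : RatFunc F}
    (h : y ^ 2 = x ^ 3 + RatFunc.X ^ 2 + (RatFunc.X ^ 2)⁻¹) :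
    mapCoeff σ x = x ∧ mapCoeff σ y = y := by
  classical
  obtain ⟨ξ, η, hξη, rfl, rfl⟩ := exists_eq_substX_X_sq_div_of_sq_eq (h.trans (add_assoc _ _ _))
  have hP := mordell_twistCoeff_nonsingular_iff.2 hξη
  obtain ⟨_, hmap⟩ := mapCoeffPoint_some σ hP
  rw [mapCoeffPoint_eq_self hc hω hσc hσω] at hmap
  injection hmap with hξ hη
  have hX : mapCoeff σ (RatFunc.X ^ 2) = RatFunc.X ^ 2 := by rw [map_pow, mapCoeff_X]
  have hcomm (f : RatFunc F) : mapCoeff σ (substX _ transcendental_X_sq f) =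
      substX _ transcendental_X_sq (mapCoeff σ f) := by
    simpa only [hX] using mapCoeff_substX σ transcendental_X_sq (hX.symm ▸ transcendental_X_sq) f
  constructor
  · rw [map_div₀, hcomm, ← hξ, hX]
  · rw [map_div₀, hcomm, ← hη, map_pow, mapCoeff_X]

end FixedPoints

section Splitting

variable {K F : Type*} [Field K] [Field F] [Algebra K F] {c ω : K}

theorem mem_range_mapCoeff_of_sq_eq [CharZero K] [IsAlgClosed F] (hc : c ^ 3 = 2)
    (hω : ω ^ 2 + ω + 1 = 0) {x y : RatFunc F}
    (h : y ^ 2 = x ^ 3 + RatFunc.X ^ 2 + (RatFunc.X ^ 2)⁻¹) :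
    x ∈ (mapCoeff (algebraMap K F)).range ∧ y ∈ (mapCoeff (algebraMap K F)).range := by
  have : CharZero F := charZero_of_injective_algebraMap (algebraMap K F).injective
  have hfix (σ : F ≃ₐ[K] F) : mapCoeff (σ : F →+* F) x = x ∧ mapCoeff (σ : F →+* F) y = y :=
    mapCoeff_eq_self_of_sq_eq (c := algebraMap K F c) (ω := algebraMap K F ω)
      (by rw [← map_pow, hc, map_ofNat]) (by simpa using congrArg (algebraMap K F) hω)
      (σ.commutes c) (σ.commutes ω) h
  exact ⟨mem_range_mapCoeff_of_forall_algEquiv_eq fun σ => (hfix σ).1,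
    mem_range_mapCoeff_of_forall_algEquiv_eq fun σ => (hfix σ).2⟩

omit [Algebra K F] in
theorem mapCoeff_mapCoeff {E : Type*} [Field E] (σ : K →+* F) (τ : F →+* E) (f : RatFunc K) :
    mapCoeff τ (mapCoeff σ f) = mapCoeff (τ.comp σ) f :=
  RingHom.congr_fun (f := (mapCoeff τ).comp (mapCoeff σ)) (g := mapCoeff (τ.comp σ))
    (ringHom_ext_of_C_of_X (by simp) (by simp)) f

theorem mem_range_mapCoeff_of_mapCoeff_mem_range {E : Type*} [Field E] [Algebra K E] [Algebra F E]
    [IsScalarTower K F E] {f : RatFunc F}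
    (hf : mapCoeff (algebraMap F E) f ∈ (mapCoeff (algebraMap K E)).range) :
    f ∈ (mapCoeff (algebraMap K F)).range := by
  obtain ⟨g, hg⟩ := hf
  refine ⟨g, (mapCoeff (algebraMap F E)).injective ?_⟩
  rw [mapCoeff_mapCoeff, ← IsScalarTower.algebraMap_eq, hg]

theorem stmt_3_general [CharZero K] (hc : c ^ 3 = 2) (hω : ω ^ 2 + ω + 1 = 0) {x y : RatFunc F}
    (h : y ^ 2 = x ^ 3 + RatFunc.X ^ 2 + (RatFunc.X ^ 2)⁻¹) :
    x ∈ (mapCoeff (algebraMap K F)).range ∧ y ∈ (mapCoeff (algebraMap K F)).range := by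
  have h' := congrArg (mapCoeff (algebraMap F (AlgebraicClosure F))) h
  simp only [map_add, map_pow, map_inv₀, mapCoeff_X] at h'
  exact (mem_range_mapCoeff_of_sq_eq hc hω h').imp mem_range_mapCoeff_of_mapCoeff_mem_range
    mem_range_mapCoeff_of_mapCoeff_mem_range

end Splitting

section Final

theorem cbrt2_pow_three : cbrt2 ^ 3 = 2 := by
  rw [cbrt2, ← Complex.ofReal_pow, ← Real.rpow_natCast, ← Real.rpow_mul zero_le_two]
  norm_num

theorem ζ3_sq_add_ζ3_add_one : ζ3 ^ 2 + ζ3 + 1 = 0 := by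
  have hζ : IsPrimitiveRoot ζ3 3 := by simpa [ζ3] using Complex.isPrimitiveRoot_exp 3 three_ne_zero
  have hsum := hζ.geom_sum_eq_zero (by norm_num)
  simp only [Finset.sum_range_succ, Finset.sum_range_zero, pow_zero, pow_one] at hsum
  linear_combination hsum

theorem memSubfieldRatFunc_of_mem_range_mapCoeff {K : Subfield ℂ} {f : RatFunc ℂ}
    (hf : f ∈ (mapCoeff (algebraMap K ℂ)).range) : memSubfieldRatFunc K f := by
  obtain ⟨g, rfl⟩ := hf
  refine ⟨g.num.map (algebraMap K ℂ), g.denom.map (algebraMap K ℂ),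
    fun n => ?_, fun n => ?_, (map_monic_ne_zero g.monic_denom), ?_⟩
  · rw [coeff_map]
    exact SetLike.coe_mem _
  · rw [coeff_map]
    exact SetLike.coe_mem _
  · rw [← mapCoeff_algebraMap, ← mapCoeff_algebraMap, ← map_div₀, g.num_div_denom]

end Final

/-- Every affine `ℂ(t)`-rational point `(x, y)` of
`E₂ : y² = x³ + t² + t⁻²` has both coordinates in `K₂(t)`, where `K₂ = ℚ(ζ₃, 2^{1/3})`;
thus `E₂(ℂ(t)) = E₂(K₂(t))` and `K₂` is the splitting field of `E₂` over `ℚ(t)`. -/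
theorem stmt_3 (x y : RatFunc ℂ)
    (h : y ^ 2 = x ^ 3 + RatFunc.X ^ 2 + (RatFunc.X ^ 2)⁻¹) :
    memSubfieldRatFunc K2 x ∧ memSubfieldRatFunc K2 y := by
  let c : K2 := ⟨cbrt2, Subfield.subset_closure (by simp)⟩
  let ω : K2 := ⟨ζ3, Subfield.subset_closure (by simp)⟩
  have hc : c ^ 3 = 2 := Subtype.ext cbrt2_pow_three
  have hω : ω ^ 2 + ω + 1 = 0 := Subtype.ext ζ3_sq_add_ζ3_add_one
  exact (stmt_3_general hc hω h).imp memSubfieldRatFunc_of_mem_range_mapCoeff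
    memSubfieldRatFunc_of_mem_range_mapCoeff
end
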